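/- Let X be a nonempty compact subset of ℝ^m with the ℓ¹ norm, I and J finite nonempty sets, q : X × I × J → X a deterministic commutative transition such that q(·, i, j) is 1-Lipschitz for ‖·‖₁ for every (i,j) ∈ I × J, and g : X × I × J → [0,1] such that g(·, i, j) is continuous for every (i,j). Then for every initial state x₁ ∈ X the stochastic game Γ(x₁) has a uniform value. -/

import Mathlib

open Filter Topology

noncomputable section

/-- Expected total payoff over `n` stages in a deterministic two-player stochastic game, when
player 1 uses the behavioral strategy `σ`, player 2 uses `τ`, the current state is `x` and the
past history (sequence of action pairs) is `h`. At each stage the two actions are drawn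
independently according to `σ h` and `τ h`. -/
def expPay {X I J : Type*} [Fintype I] [Fintype J]
    (q : X → I → J → X) (g : X → I → J → ℝ)
    (σ : List (I × J) → PMF I) (τ : List (I × J) → PMF J) :
    ℕ → X → List (I × J) → ℝ
  | 0, _, _ => 0
  | n + 1, x, h => ∑ i : I, ∑ j : J, ((σ h) i).toReal * ((τ h) j).toReal *
      (g x i j + expPay q g σ τ n (q x i j) (h ++ [(i, j)]))

/-- The `n`-stage average expected payoff `γ_n(x₁, σ, τ)`. -/
def gamePayoff {X I J : Type*} [Fintype I] [Fintype J]
    (q : X → I → J → X) (g : X → I → J → ℝ)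
    (σ : List (I × J) → PMF I) (τ : List (I × J) → PMF J) (x₁ : X) (n : ℕ) : ℝ :=
  (1 / (n : ℝ)) * expPay q g σ τ n x₁ []

/-- Player 1 guarantees `w` in the game `Γ(x₁)`. -/
def Guarantees1 {X I J : Type*} [Fintype I] [Fintype J]
    (q : X → I → J → X) (g : X → I → J → ℝ) (x₁ : X) (w : ℝ) : Prop :=
  ∀ ε > (0 : ℝ), ∃ (σ : List (I × J) → PMF I) (N : ℕ),
    ∀ (τ : List (I × J) → PMF J), ∀ n ≥ N, w - ε ≤ gamePayoff q g σ τ x₁ n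

/-- Player 2 guarantees `w` in the game `Γ(x₁)`. -/
def Guarantees2 {X I J : Type*} [Fintype I] [Fintype J]
    (q : X → I → J → X) (g : X → I → J → ℝ) (x₁ : X) (w : ℝ) : Prop :=
  ∀ ε > (0 : ℝ), ∃ (τ : List (I × J) → PMF J) (N : ℕ),
    ∀ (σ : List (I × J) → PMF I), ∀ n ≥ N, gamePayoff q g σ τ x₁ n ≤ w + ε

/-! ### Matrix games and the Shapley equation -/

lemma csg_minimax {I J : Type*} [Fintype I] [Nonempty I] [Fintype J] [Nonempty J]
    (M : I → J → ℝ) : ∃ v : ℝ, ∃ p ∈ stdSimplex ℝ I, ∃ r ∈ stdSimplex ℝ J,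
      (∀ j, v ≤ ∑ i, p i * M i j) ∧ (∀ i, ∑ j, r j * M i j ≤ v) := by
  classical
  obtain ⟨a, ha, b, hb, hab⟩ := Sion.exists_isSaddlePointOn (X := stdSimplex ℝ J)
    (Y := stdSimplex ℝ I) (f := fun y x => ∑ i, ∑ j, x i * y j * M i j)
    ⟨_, single_mem_stdSimplex ℝ (Classical.arbitrary J)⟩ (convex_stdSimplex ℝ J)
    (isCompact_stdSimplex ℝ J)
    (fun x _ => (by fun_prop : ContinuousOn _ _).lowerSemicontinuousOn)
    (fun x _ => by
      apply ConvexOn.quasiconvexOn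
      refine ⟨convex_stdSimplex ℝ J, ?_⟩
      intro y _ z _ s t _ _ _
      apply le_of_eq
      simp only [smul_eq_mul, Finset.mul_sum, ← Finset.sum_add_distrib, Pi.add_apply,
        Pi.smul_apply]
      refine Finset.sum_congr rfl fun i _ => Finset.sum_congr rfl fun j _ => ?_
      ring)
    (convex_stdSimplex ℝ I)
    ⟨_, single_mem_stdSimplex ℝ (Classical.arbitrary I)⟩
    (isCompact_stdSimplex ℝ I)
    (fun x _ => (by fun_prop : ContinuousOn _ _).upperSemicontinuousOn)
    (fun x _ => by
      apply ConcaveOn.quasiconcaveOn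
      refine ⟨convex_stdSimplex ℝ I, ?_⟩
      intro y _ z _ s t _ _ _
      apply le_of_eq
      simp only [smul_eq_mul, Finset.mul_sum, ← Finset.sum_add_distrib, Pi.add_apply,
        Pi.smul_apply]
      refine Finset.sum_congr rfl fun i _ => Finset.sum_congr rfl fun j _ => ?_
      ring)
  refine ⟨∑ i, ∑ j, b i * a j * M i j, b, hb, a, ha, ?_, ?_⟩
  · intro j
    have := hab _ (single_mem_stdSimplex ℝ j) b hb
    simpa [Pi.single_apply] using this
  · intro i
    have := hab a ha _ (single_mem_stdSimplex ℝ i)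
    simpa [Pi.single_apply] using this

/-- The average of a matrix against mixed actions. -/
lemma csg_avg_le {I : Type*} [Fintype I] {p : I → ℝ} (hp : p ∈ stdSimplex ℝ I) {f : I → ℝ} {c : ℝ}
    (h : ∀ i, f i ≤ c) : ∑ i, p i * f i ≤ c := by
  calc ∑ i, p i * f i ≤ ∑ i, p i * c :=
        Finset.sum_le_sum fun i _ => mul_le_mul_of_nonneg_left (h i) (hp.1 i)
    _ = c := by rw [← Finset.sum_mul, hp.2, one_mul]

lemma csg_le_avg {I : Type*} [Fintype I] {p : I → ℝ} (hp : p ∈ stdSimplex ℝ I) {f : I → ℝ} {c : ℝ}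
    (h : ∀ i, c ≤ f i) : c ≤ ∑ i, p i * f i := by
  calc c = ∑ i, p i * c := by rw [← Finset.sum_mul, hp.2, one_mul]
    _ ≤ ∑ i, p i * f i :=
        Finset.sum_le_sum fun i _ => mul_le_mul_of_nonneg_left (h i) (hp.1 i)

/-- comparison of values -/
lemma csg_val_le {I J : Type*} [Fintype I] [Fintype J] {M M' : I → J → ℝ} {v v' δ : ℝ}
    {p : I → ℝ} (hp : p ∈ stdSimplex ℝ I) {r : J → ℝ} (hr : r ∈ stdSimplex ℝ J)
    (h : ∀ j, v ≤ ∑ i, p i * M i j) (h' : ∀ i, ∑ j, r j * M' i j ≤ v')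
    (hM : ∀ i j, M i j ≤ M' i j + δ) : v ≤ v' + δ := by
  have h1 : v ≤ ∑ j, r j * ∑ i, p i * M i j := csg_le_avg hr h
  have h2 : ∑ i, p i * ∑ j, r j * M' i j ≤ v' := csg_avg_le hp h'
  have h3 : ∑ j, r j * ∑ i, p i * M i j ≤ ∑ j, r j * ∑ i, p i * (M' i j + δ) :=
    Finset.sum_le_sum fun j _ => mul_le_mul_of_nonneg_left
      (Finset.sum_le_sum fun i _ => mul_le_mul_of_nonneg_left (hM i j) (hp.1 i)) (hr.1 j)
  have h4 : ∑ j, r j * ∑ i, p i * (M' i j + δ) = ∑ i, p i * ∑ j, r j * M' i j + δ := by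
    have : ∀ j, ∑ i, p i * (M' i j + δ) = ∑ i, p i * M' i j + δ := fun j => by
      simp only [mul_add, Finset.sum_add_distrib, ← Finset.sum_mul, hp.2, one_mul]
    simp only [this]
    simp only [mul_add, Finset.sum_add_distrib, ← Finset.sum_mul, hr.2, one_mul]
    congr 1
    simp only [Finset.mul_sum]
    rw [Finset.sum_comm]
    refine Finset.sum_congr rfl fun i _ => Finset.sum_congr rfl fun j _ => ?_
    ring
  linarith

/-- `v` solves the Shapley equation for the discount factor `l`. -/
def CsgShapley {K I J : Type*} [Fintype I] [Fintype J] (q : K → I → J → K) (g : K → I → J → ℝ)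
    (l : ℝ) (v : K → ℝ) : Prop :=
  ∀ x, ∃ p ∈ stdSimplex ℝ I, ∃ r ∈ stdSimplex ℝ J,
    (∀ j, v x ≤ ∑ i, p i * (l * g x i j + (1 - l) * v (q x i j))) ∧
    (∀ i, ∑ j, r j * (l * g x i j + (1 - l) * v (q x i j)) ≤ v x)

lemma csg_shapley_exists {K I J : Type*} [Fintype K] [Fintype I] [Nonempty I] [Fintype J]
    [Nonempty J] (q : K → I → J → K) (g : K → I → J → ℝ) {l : ℝ} (hl : 0 < l) (hl1 : l ≤ 1) :
    ∃ v : K → ℝ, CsgShapley q g l v := by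
  choose val p hp r hr h1 h2 using fun M : I → J → ℝ => csg_minimax M
  let T : (K → ℝ) → (K → ℝ) := fun v x => val (fun i j => l * g x i j + (1 - l) * v (q x i j))
  have hT : ContractingWith (Real.toNNReal (1 - l)) T := by
    refine ⟨?_, ?_⟩
    · rw [← NNReal.coe_lt_coe, Real.coe_toNNReal _ (by linarith)]
      simp [hl]
    · apply LipschitzWith.of_dist_le_mul
      intro v w
      rw [Real.coe_toNNReal _ (by linarith)]
      rw [dist_pi_le_iff (mul_nonneg (by linarith) dist_nonneg)]
      intro x
      have hd : ∀ y, |v y - w y| ≤ dist v w := fun y => by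
        rw [← Real.dist_eq]; exact dist_le_pi_dist v w y
      rw [Real.dist_eq, abs_sub_le_iff]
      constructor
      · have := csg_val_le (hp _) (hr _) (h1 (fun i j => l * g x i j + (1 - l) * v (q x i j)))
          (h2 (fun i j => l * g x i j + (1 - l) * w (q x i j))) (δ := (1 - l) * dist v w)
          (fun i j => by
            have := mul_le_mul_of_nonneg_left (abs_le.1 (hd (q x i j))).2
              (by linarith : 0 ≤ 1 - l)
            linarith)
        simp only [T]; linarith
      · have := csg_val_le (hp _) (hr _) (h1 (fun i j => l * g x i j + (1 - l) * w (q x i j)))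
          (h2 (fun i j => l * g x i j + (1 - l) * v (q x i j))) (δ := (1 - l) * dist v w)
          (fun i j => by
            have := mul_le_mul_of_nonneg_left (abs_le.1 (hd (q x i j))).1
              (by linarith : 0 ≤ 1 - l)
            linarith)
        simp only [T]; linarith
  refine ⟨ContractingWith.fixedPoint T hT, fun x => ⟨_, hp (fun i j => l * g x i j + (1 - l) * ContractingWith.fixedPoint T hT (q x i j)),
    _, hr (fun i j => l * g x i j + (1 - l) * ContractingWith.fixedPoint T hT (q x i j)), ?_, ?_⟩⟩
  · intro j
    have := h1 (fun i j => l * g x i j + (1 - l) * ContractingWith.fixedPoint T hT (q x i j)) j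
    have e : T (ContractingWith.fixedPoint T hT) x = ContractingWith.fixedPoint T hT x := congrFun hT.fixedPoint_isFixedPt x
    rw [← e]
    exact this
  · intro j
    have := h2 (fun i j => l * g x i j + (1 - l) * ContractingWith.fixedPoint T hT (q x i j)) j
    have e : T (ContractingWith.fixedPoint T hT) x = ContractingWith.fixedPoint T hT x := congrFun hT.fixedPoint_isFixedPt x
    rw [← e]
    exact this

lemma csg_shapley_mem {K I J : Type*} [Fintype K] [Fintype I] [Fintype J]
    {q : K → I → J → K} {g : K → I → J → ℝ}
    (hg : ∀ x i j, g x i j ∈ Set.Icc (0 : ℝ) 1) {l : ℝ} (hl : 0 < l) (hl1 : l ≤ 1)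
    {v : K → ℝ} (hv : CsgShapley q g l v) (x : K) : v x ∈ Set.Icc (0 : ℝ) 1 := by
  have : Nonempty K := ⟨x⟩
  constructor
  · obtain ⟨y, hy⟩ := Finite.exists_min v
    obtain ⟨p, hp, r, hr, h1, h2⟩ := hv y
    have : Nonempty I := by
      by_contra hI
      rw [not_nonempty_iff] at hI
      have := hp.2
      simp at this
    have h3 := (csg_le_avg (c := (1 - l) * v y) hr (fun j => ?_)).trans (h2 (Classical.arbitrary I))
    · have : l * v y ≥ 0 := by linarith
      have : 0 ≤ v y := nonneg_of_mul_nonneg_right (by linarith) hl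
      exact this.trans (hy x)
    · have := mul_nonneg hl.le (hg y (Classical.arbitrary I) j).1
      have := mul_le_mul_of_nonneg_left (hy (q y (Classical.arbitrary I) j)) (by linarith : 0 ≤ 1 - l)
      linarith
  · obtain ⟨y, hy⟩ := Finite.exists_max v
    obtain ⟨p, hp, r, hr, h1, h2⟩ := hv y
    have : Nonempty J := by
      by_contra hI
      rw [not_nonempty_iff] at hI
      have := hr.2
      simp at this
    have h3 := (h1 (Classical.arbitrary J)).trans (csg_avg_le (c := l + (1 - l) * v y) hp (fun i => ?_))
    · have : l * (1 - v y) ≥ 0 := by linarith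
      have : 0 ≤ 1 - v y := nonneg_of_mul_nonneg_right (by linarith) hl
      linarith [hy x]
    · have := mul_le_mul_of_nonneg_left (hg y i (Classical.arbitrary J)).2 hl.le
      have := mul_le_mul_of_nonneg_left (hy (q y i (Classical.arbitrary J))) (by linarith : 0 ≤ 1 - l)
      linarith

lemma csg_shapley_lip {K I J : Type*} [Fintype K] [Fintype I] [Fintype J]
    {q : K → I → J → K} {g : K → I → J → ℝ}
    (hg : ∀ x i j, g x i j ∈ Set.Icc (0 : ℝ) 1) {l l' : ℝ} (hl : 0 < l) (hl1 : l ≤ 1)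
    (hl' : 0 < l') (hl1' : l' ≤ 1)
    {v v' : K → ℝ} (hv : CsgShapley q g l v) (hv' : CsgShapley q g l' v') (x : K) :
    l' * (v x - v' x) ≤ |l - l'| := by
  have : Nonempty K := ⟨x⟩
  obtain ⟨y, hy⟩ := Finite.exists_max (fun y => v y - v' y)
  obtain ⟨p, hp, r, hr, h1, h2⟩ := hv y
  obtain ⟨p', hp', r', hr', h1', h2'⟩ := hv' y
  have h3 := csg_val_le hp hr' h1 h2' (δ := |l - l'| + (1 - l') * (v y - v' y)) ?_
  · have := mul_le_mul_of_nonneg_left (hy x) hl'.le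
    linarith
  · intro i j
    have a1 := hg y i j
    have a2 := csg_shapley_mem hg hl hl1 hv (q y i j)
    have a3 := mul_le_mul_of_nonneg_left (hy (q y i j)) (by linarith : 0 ≤ 1 - l')
    have a4 : (l - l') * (g y i j - v (q y i j)) ≤ |l - l'| := by
      refine (le_abs_self _).trans ?_
      rw [abs_mul]
      refine mul_le_of_le_one_right (abs_nonneg _) ?_
      rw [abs_le]; constructor <;> linarith [a1.1, a1.2, a2.1, a2.2]
    nlinarith

/-! ### Kernels of matrix games with value zero -/

/-- Gram matrix of the rows in `S` restricted to the columns in `U`. -/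
def csgGram {A B R : Type*} [DecidableEq A] [CommRing R] (S : Finset A) (U : Finset B)
    (M : A → B → R) : Matrix A A R :=
  fun a a' => ∑ b ∈ U, M a b * M a' b + if a = a' ∧ a ∉ S then 1 else 0

lemma csgGram_det {A B : Type*} [Fintype A] [DecidableEq A] (S : Finset A)
    (U : Finset B) (M : A → B → ℝ) :
    (csgGram S U M).det = 0 ↔
      ∃ u : A → ℝ, u ≠ 0 ∧ (∀ a, a ∉ S → u a = 0) ∧ ∀ b ∈ U, ∑ a, u a * M a b = 0 := by
  rw [← Matrix.exists_mulVec_eq_zero_iff]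
  refine exists_congr fun u => and_congr_right fun _ => ?_
  have key : ∀ a, (csgGram S U M).mulVec u a =
      ∑ b ∈ U, M a b * (∑ a', u a' * M a' b) + if a ∉ S then u a else 0 := by
    intro a
    simp only [Matrix.mulVec, dotProduct, csgGram, add_mul, Finset.sum_add_distrib]
    congr 1
    · simp only [Finset.sum_mul, Finset.mul_sum]
      rw [Finset.sum_comm]
      refine Finset.sum_congr rfl fun b _ => Finset.sum_congr rfl fun a' _ => ?_
      ring
    · simp only [ite_mul, one_mul, zero_mul, ite_and]
      rw [Finset.sum_ite_eq]
      simp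
  constructor
  · intro h
    have h0 : ∑ a, u a * (csgGram S U M).mulVec u a = 0 := by simp [h]
    have h1 : ∑ b ∈ U, (∑ a, u a * M a b) ^ 2 + ∑ a, (if a ∉ S then u a ^ 2 else 0) = 0 := by
      refine Eq.trans ?_ h0
      simp only [key, mul_add, Finset.sum_add_distrib]
      congr 1
      · have : ∀ a, u a * ∑ b ∈ U, M a b * (∑ a', u a' * M a' b) =
            ∑ b ∈ U, u a * (M a b * (∑ a', u a' * M a' b)) := fun a => Finset.mul_sum _ _ _
        simp only [this]
        rw [Finset.sum_comm]
        refine Finset.sum_congr rfl fun b _ => ?_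
        rw [sq, Finset.sum_mul]
        refine Finset.sum_congr rfl fun a _ => ?_
        ring
      · refine Finset.sum_congr rfl fun a _ => ?_
        split_ifs <;> ring
    have n1 : 0 ≤ ∑ b ∈ U, (∑ a, u a * M a b) ^ 2 := Finset.sum_nonneg fun b _ => sq_nonneg _
    have n2' : ∀ a ∈ Finset.univ, 0 ≤ (if a ∉ S then u a ^ 2 else 0) := fun a _ => by
      split_ifs <;> positivity
    have n2 := Finset.sum_nonneg n2'
    have e1 : ∑ b ∈ U, (∑ a, u a * M a b) ^ 2 = 0 := by linarith
    have e2 : ∑ a, (if a ∉ S then u a ^ 2 else 0) = 0 := by linarith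
    rw [Finset.sum_eq_zero_iff_of_nonneg (fun b _ => sq_nonneg _)] at e1
    rw [Finset.sum_eq_zero_iff_of_nonneg n2'] at e2
    refine ⟨fun a ha => ?_, fun b hb => ?_⟩
    · have := e2 a (Finset.mem_univ a)
      simpa [ha] using this
    · simpa using e1 b hb
  · rintro ⟨h1, h2⟩
    ext a
    rw [key, Finset.sum_eq_zero fun b hb => by rw [h2 b hb, mul_zero]]
    by_cases ha : a ∈ S
    · simp [ha]
    · simp [ha, h1 a ha]

lemma csg_kernel {A B : Type*} [Fintype A] [DecidableEq A] [Fintype B]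
    (M C : A → B → ℝ) (hC : ∀ a b, 0 < C a b)
    {x₀ : A → ℝ} (hx₀ : x₀ ∈ stdSimplex ℝ A) (hxM₀ : ∀ b, 0 ≤ ∑ a, x₀ a * M a b)
    {y : B → ℝ} (hy : y ∈ stdSimplex ℝ B) (hyM : ∀ a, ∑ b, y b * M a b ≤ 0) :
    ∃ (S : Finset A) (U : Finset B), (csgGram S U M).det = 0 ∧
      ∃ t : ℝ, (csgGram S U (fun a b => M a b - t * C a b)).det ≠ 0 := by
  classical
  let P : Set (A → ℝ) := stdSimplex ℝ A ∩ {x | ∀ b, 0 ≤ ∑ a, x a * M a b}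
  have hPc : IsCompact P := by
    refine (isCompact_stdSimplex ℝ A).inter_right ?_
    simp only [Set.ofPred_forall]
    exact isClosed_iInter fun b => isClosed_le continuous_const (by fun_prop)
  obtain ⟨x, hxP, hxe⟩ := hPc.extremePoints_nonempty ⟨x₀, hx₀, hxM₀⟩
  obtain ⟨hx, hxM⟩ := hxP
  simp only [Set.mem_ofPred_eq] at hxM
  let S : Finset A := Finset.univ.filter fun a => x a ≠ 0
  let U : Finset B := Finset.univ.filter fun b => ∑ a, x a * M a b = 0
  have hS : ∀ a, a ∉ S → x a = 0 := fun a ha => by simpa [S] using ha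
  have hU : ∀ b ∈ U, ∑ a, x a * M a b = 0 := fun b hb => by simpa [U] using hb
  -- kernel is spanned by `x`
  have hker : ∀ u : A → ℝ, (∀ a, a ∉ S → u a = 0) → (∀ b ∈ U, ∑ a, u a * M a b = 0) →
      ∀ a, u a = (∑ a, u a) * x a := by
    intro u hu1 hu2
    let w : A → ℝ := fun a => u a - (∑ a, u a) * x a
    have hw1 : ∀ a, a ∉ S → w a = 0 := fun a ha => by simp [w, hu1 a ha, hS a ha]
    have hw2 : ∀ b ∈ U, ∑ a, w a * M a b = 0 := fun b hb => by
      simp only [w, sub_mul, Finset.sum_sub_distrib, mul_assoc, ← Finset.mul_sum, hU b hb, hu2 b hb]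
      simp
    have hw3 : ∑ a, w a = 0 := by
      simp only [w, Finset.sum_sub_distrib, ← Finset.mul_sum, hx.2]; simp
    have hev : ∀ (α β : ℝ), 0 ≤ α → (α = 0 → β = 0) →
        ∀ᶠ t in 𝓝[>] (0 : ℝ), 0 ≤ α + t * β ∧ 0 ≤ α - t * β := by
      intro α β hα hαβ
      rcases hα.eq_or_lt with h | h
      · simp [← h, hαβ h.symm]
      · have c1 : Tendsto (fun t : ℝ => α + t * β) (𝓝 0) (𝓝 α) := by
          have : Continuous fun t : ℝ => α + t * β := by fun_prop
          simpa using this.tendsto 0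
        have c2 : Tendsto (fun t : ℝ => α - t * β) (𝓝 0) (𝓝 α) := by
          have : Continuous fun t : ℝ => α - t * β := by fun_prop
          simpa using this.tendsto 0
        filter_upwards [nhdsWithin_le_nhds (c1.eventually (lt_mem_nhds h)),
          nhdsWithin_le_nhds (c2.eventually (lt_mem_nhds h))] with t h1 h2
        exact ⟨h1.le, h2.le⟩
    have ev1 : ∀ᶠ t in 𝓝[>] (0 : ℝ), ∀ a, 0 ≤ x a + t * w a ∧ 0 ≤ x a - t * w a :=
      eventually_all.2 fun a => hev _ _ (hx.1 a) fun h => hw1 a (by simp [S, h])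
    have ev2 : ∀ᶠ t in 𝓝[>] (0 : ℝ), ∀ b, 0 ≤ (∑ a, x a * M a b) + t * (∑ a, w a * M a b) ∧
        0 ≤ (∑ a, x a * M a b) - t * (∑ a, w a * M a b) :=
      eventually_all.2 fun b => hev _ _ (hxM b) fun h => hw2 b (by simp [U, h])
    obtain ⟨t, ⟨h1, h2⟩, ht⟩ := ((ev1.and ev2).and self_mem_nhdsWithin).exists
    have ht : 0 < t := ht
    have m1 : (fun a => x a + t * w a) ∈ P := by
      refine ⟨⟨fun a => (h1 a).1, ?_⟩, fun b => ?_⟩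
      · rw [Finset.sum_add_distrib, ← Finset.mul_sum, hw3, hx.2]; simp
      · have := (h2 b).1
        simpa only [add_mul, Finset.sum_add_distrib, mul_assoc, ← Finset.mul_sum] using this
    have m2 : (fun a => x a - t * w a) ∈ P := by
      refine ⟨⟨fun a => (h1 a).2, ?_⟩, fun b => ?_⟩
      · rw [Finset.sum_sub_distrib, ← Finset.mul_sum, hw3, hx.2]; simp
      · have := (h2 b).2
        simpa only [sub_mul, Finset.sum_sub_distrib, mul_assoc, ← Finset.mul_sum] using this
    have h3 := hxe m1 m2 ⟨1/2, 1/2, by norm_num, by norm_num, by norm_num, by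
      ext a
      simp only [Pi.add_apply, Pi.smul_apply, smul_eq_mul]
      ring⟩
    intro a
    have h4 : x a + t * w a = x a := congrFun h3 a
    have h5 : w a = 0 := by
      have : t * w a = 0 := by linarith
      rcases mul_eq_zero.1 this with h | h
      · exact absurd h ht.ne'
      · exact h
    simp only [w] at h5
    linarith
  -- complementary slackness
  have hswap : ∑ b, y b * ∑ a, x a * M a b = ∑ a, x a * ∑ b, y b * M a b := by
    simp only [Finset.mul_sum]
    rw [Finset.sum_comm]
    refine Finset.sum_congr rfl fun b _ => Finset.sum_congr rfl fun a' _ => ?_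
    ring
  have hpos : ∀ b ∈ Finset.univ, 0 ≤ y b * ∑ a, x a * M a b := fun b _ =>
    mul_nonneg (hy.1 b) (hxM b)
  have hneg : ∀ a ∈ Finset.univ, x a * ∑ b, y b * M a b ≤ 0 := fun a _ =>
    mul_nonpos_of_nonneg_of_nonpos (hx.1 a) (hyM a)
  have hz1 : ∑ b, y b * ∑ a, x a * M a b = 0 :=
    le_antisymm (hswap ▸ Finset.sum_nonpos hneg) (Finset.sum_nonneg hpos)
  have hz2 : ∑ a, x a * ∑ b, y b * M a b = 0 := hswap ▸ hz1
  have hy0 : ∀ b, b ∉ U → y b = 0 := fun b hb => by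
    have := (Finset.sum_eq_zero_iff_of_nonneg hpos).1 hz1 b (Finset.mem_univ b)
    simp only [U, Finset.mem_filter, Finset.mem_univ, true_and] at hb
    exact (mul_eq_zero.1 this).resolve_right hb
  have hyS : ∀ a ∈ S, ∑ b, y b * M a b = 0 := fun a ha => by
    have := (Finset.sum_eq_zero_iff_of_nonpos hneg).1 hz2 a (Finset.mem_univ a)
    simp only [S, Finset.mem_filter, Finset.mem_univ, true_and] at ha
    exact (mul_eq_zero.1 this).resolve_left ha
  refine ⟨S, U, (csgGram_det S U M).2 ⟨x, ?_, hS, hU⟩, ?_⟩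
  · intro h
    have := hx.2
    simp [h] at this
  by_contra! hcon
  have hn : ∀ n : ℕ, ∃ u : A → ℝ, ‖u‖ = 1 ∧ (∀ a, a ∉ S → u a = 0) ∧
      ∀ b ∈ U, ∑ a, u a * (M a b - (1 / ((n : ℝ) + 1)) * C a b) = 0 := by
    intro n
    obtain ⟨u, hu0, hu1, hu2⟩ := (csgGram_det _ _ _).1 (hcon (1 / ((n : ℝ) + 1)))
    refine ⟨‖u‖⁻¹ • u, ?_, ?_, ?_⟩
    · rw [norm_smul, norm_inv, norm_norm]
      exact inv_mul_cancel₀ (norm_ne_zero_iff.2 hu0)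
    · intro a ha; simp [hu1 a ha]
    · intro b hb
      simp only [Pi.smul_apply, smul_eq_mul, mul_assoc, ← Finset.mul_sum, hu2 b hb, mul_zero]
  choose u hu1 hu2 hu3 using hn
  obtain ⟨u', hu', φ, hφ, hlim⟩ := (isCompact_sphere (0 : A → ℝ) 1).tendsto_subseq
    (x := u) (fun n => by simp [hu1 n])
  have hlim' : ∀ a, Tendsto (fun n => u (φ n) a) atTop (𝓝 (u' a)) := fun a =>
    (tendsto_pi_nhds.1 hlim) a
  have htend : Tendsto (fun n => (1 / ((φ n : ℝ) + 1))) atTop (𝓝 0) :=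
    (tendsto_one_div_add_atTop_nhds_zero_nat (𝕜 := ℝ)).comp hφ.tendsto_atTop
  have k1 : ∀ a, a ∉ S → u' a = 0 := fun a ha =>
    tendsto_nhds_unique (hlim' a) (by simp [hu2 _ a ha])
  have k2 : ∀ b ∈ U, ∑ a, u' a * M a b = 0 := fun b hb => by
    have : Tendsto (fun n => ∑ a, u (φ n) a * (M a b - (1 / ((φ n : ℝ) + 1)) * C a b)) atTop
        (𝓝 (∑ a, u' a * (M a b - 0 * C a b))) := by
      refine tendsto_finsetSum _ fun a _ => (hlim' a).mul (tendsto_const_nhds.sub (htend.mul_const _))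
    have h2 := tendsto_nhds_unique this (by simp only [hu3 _ b hb]; exact tendsto_const_nhds)
    simpa using h2
  have k3 : ∀ n, ∑ a, u n a * ∑ b, y b * C a b = 0 := by
    intro n
    have e : ∑ b, y b * ∑ a, u n a * (M a b - (1 / ((n : ℝ) + 1)) * C a b) = 0 := by
      refine Finset.sum_eq_zero fun b _ => ?_
      by_cases hb : b ∈ U
      · rw [hu3 n b hb, mul_zero]
      · rw [hy0 b hb, zero_mul]
    have e2 : ∑ b, y b * ∑ a, u n a * (M a b - (1 / ((n : ℝ) + 1)) * C a b) =
        ∑ a, u n a * ∑ b, y b * M a b - (1 / ((n : ℝ) + 1)) * ∑ a, u n a * ∑ b, y b * C a b := by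
      simp only [Finset.mul_sum]
      rw [Finset.sum_comm, ← Finset.sum_sub_distrib]
      refine Finset.sum_congr rfl fun b _ => ?_
      rw [← Finset.sum_sub_distrib]
      refine Finset.sum_congr rfl fun a' _ => ?_
      ring
    have e3 : ∑ a, u n a * ∑ b, y b * M a b = 0 := by
      refine Finset.sum_eq_zero fun a _ => ?_
      by_cases ha : a ∈ S
      · rw [hyS a ha, mul_zero]
      · rw [hu2 n a ha, zero_mul]
    rw [e, e3, zero_sub, eq_comm, neg_eq_zero, mul_eq_zero] at e2
    refine e2.resolve_left ?_
    positivity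
  have k4 : ∑ a, u' a * ∑ b, y b * C a b = 0 := by
    have : Tendsto (fun n => ∑ a, u (φ n) a * ∑ b, y b * C a b) atTop
        (𝓝 (∑ a, u' a * ∑ b, y b * C a b)) :=
      tendsto_finsetSum _ fun a _ => (hlim' a).mul_const _
    exact tendsto_nhds_unique this (by simp only [k3]; exact tendsto_const_nhds)
  have k5 := hker u' k1 k2
  set c := ∑ a, u' a with hc
  have hc0 : c ≠ 0 := by
    intro h
    have : u' = 0 := by ext a; rw [k5 a, h]; simp
    rw [this] at hu'
    simp at hu'
  have k6 : c * ∑ a, x a * ∑ b, y b * C a b = 0 := by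
    rw [← k4, Finset.mul_sum]
    refine Finset.sum_congr rfl fun a _ => ?_
    conv_rhs => rw [k5 a]
    ring
  have hyC : ∀ a, 0 < ∑ b, y b * C a b := by
    intro a
    obtain ⟨b, hb⟩ : ∃ b, y b ≠ 0 := by
      by_contra! h
      have := hy.2
      simp [h] at this
    exact Finset.sum_pos' (fun b _ => mul_nonneg (hy.1 b) (hC a b).le)
      ⟨b, Finset.mem_univ b, mul_pos (lt_of_le_of_ne (hy.1 b) (Ne.symm hb)) (hC a b)⟩
  have hxC : 0 < ∑ a, x a * ∑ b, y b * C a b := by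
    obtain ⟨a, ha⟩ : ∃ a, x a ≠ 0 := by
      by_contra! h
      have := hx.2
      simp [h] at this
    exact Finset.sum_pos' (fun b _ => mul_nonneg (hx.1 b) (hyC b).le)
      ⟨a, Finset.mem_univ a, mul_pos (lt_of_le_of_ne (hx.1 a) (Ne.symm ha)) (hyC a)⟩
  rcases mul_eq_zero.1 k6 with h | h
  · exact hc0 h
  · exact hxC.ne' h

/-! ### The algebraic curve containing the discounted values -/

/-- The matrix `Id - (1-l) Q(α, β)` for pure stationary strategies. -/
def csgA {K I J R : Type*} [DecidableEq K] [CommRing R] (q : K → I → J → K) (l : R)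
    (α : K → I) (β : K → J) : Matrix K K R :=
  fun x x' => (if x = x' then 1 else 0) - (1 - l) * (if q x (α x) (β x) = x' then 1 else 0)

/-- The entries of the Attia, Oliu-Barton matrix game. -/
def csgW {K I J R : Type*} [Fintype K] [DecidableEq K] [CommRing R] (q : K → I → J → K)
    (g : K → I → J → R) (l z : R) (k : K) (α : K → I) (β : K → J) : R :=
  ((csgA q l α β).updateCol k (fun x => l * g x (α x) (β x) - z * csgA q l α β x k)).det

lemma csgW_map {K I J R R' : Type*} [Fintype K] [DecidableEq K] [CommRing R] [CommRing R']
    (φ : R →+* R') (q : K → I → J → K)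
    (g : K → I → J → R) (l z : R) (k : K) (α : K → I) (β : K → J) :
    φ (csgW q g l z k α β) = csgW q (fun x i j => φ (g x i j)) (φ l) (φ z) k α β := by
  unfold csgW
  rw [RingHom.map_det]
  congr 1
  ext x x'
  simp only [RingHom.mapMatrix_apply, Matrix.map_apply, Matrix.updateCol_apply, csgA]
  split_ifs <;> simp

lemma csgW_shift {K I J : Type*} [Fintype K] [DecidableEq K] (q : K → I → J → K)
    (g : K → I → J → ℝ) (l z t : ℝ) (k : K) (α : K → I) (β : K → J) :
    csgW q g l (z + t) k α β = csgW q g l z k α β - t * (csgA q l α β).det := by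
  unfold csgW
  have : (fun x => l * g x (α x) (β x) - (z + t) * csgA q l α β x k) =
    (fun x => l * g x (α x) (β x) - z * csgA q l α β x k) +
      (-t) • (fun x => csgA q l α β x k) := by
    ext x; simp; ring
  rw [this, Matrix.det_updateCol_add, Matrix.det_updateCol_smul]
  have h2 : (csgA q l α β).updateCol k (fun x => csgA q l α β x k) = csgA q l α β :=
    Matrix.updateCol_eq_self _ _
  rw [h2]
  ring

section Stoch

variable {K : Type*} [Fintype K] [DecidableEq K]

lemma csg_mono {Q : Matrix K K ℝ} (hQ : ∀ x, Q x ∈ stdSimplex ℝ K) {t : ℝ} (ht0 : 0 ≤ t)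
    (ht : t < 1) {w : K → ℝ} (hw : ∀ x, 0 ≤ ((1 - t • Q).mulVec w) x) (x : K) : 0 ≤ w x := by
  have : Nonempty K := ⟨x⟩
  obtain ⟨y, hy⟩ := Finite.exists_min w
  have h1 := hw y
  rw [Matrix.sub_mulVec, Matrix.one_mulVec, Matrix.smul_mulVec] at h1
  have h2 : w y ≤ (Q.mulVec w) y := csg_le_avg (hQ y) hy
  simp only [Pi.sub_apply, Pi.smul_apply, smul_eq_mul] at h1
  have h3 := mul_le_mul_of_nonneg_left h2 ht0
  have h4 : 0 ≤ w y := by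
    by_contra hneg
    push Not at hneg
    have := h2
    by_cases hQw : (Q.mulVec w) y ≤ 0
    · nlinarith
    · push Not at hQw
      nlinarith
  exact h4.trans (hy x)

lemma csg_det_pos {Q : Matrix K K ℝ} (hQ : ∀ x, Q x ∈ stdSimplex ℝ K) {t : ℝ} (ht0 : 0 ≤ t)
    (ht : t < 1) : 0 < (1 - t • Q).det := by
  have hne : ∀ s ∈ Set.Icc 0 t, (1 - s • Q).det ≠ 0 := by
    intro s hs h
    obtain ⟨u, hu, hu0⟩ := Matrix.exists_mulVec_eq_zero_iff.2 h
    apply hu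
    ext x
    apply le_antisymm
    · have := csg_mono hQ hs.1 (hs.2.trans_lt ht) (w := -u) (by simp [Matrix.mulVec_neg, hu0]) x
      simpa using this
    · exact csg_mono hQ hs.1 (hs.2.trans_lt ht) (w := u) (by simp [hu0]) x
  have hcont : ContinuousOn (fun s : ℝ => (1 - s • Q).det) (Set.Icc 0 t) := by
    apply Continuous.continuousOn
    apply Continuous.matrix_det
    fun_prop
  by_contra hneg
  push Not at hneg
  have := intermediate_value_Icc' ht0 hcont
  obtain ⟨s, hs, hs0⟩ := this ⟨hneg, by simp⟩
  exact hne s hs hs0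

/-- sign of the Cramer determinants -/
lemma csg_cramer_nonneg {Q : Matrix K K ℝ} (hQ : ∀ x, Q x ∈ stdSimplex ℝ K) {t : ℝ} (ht0 : 0 ≤ t)
    (ht : t < 1) {v b : K → ℝ} (k : K)
    (hv : ∀ x, ((1 - t • Q).mulVec v) x ≤ b x) :
    0 ≤ ((1 - t • Q).updateCol k (fun x => b x - v k * (1 - t • Q) x k)).det := by
  set A := 1 - t • Q with hA
  have hdet := csg_det_pos hQ ht0 ht
  rw [← hA] at hdet
  obtain ⟨u, hu⟩ : ∃ u, A.mulVec u = b := by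
    refine ⟨A⁻¹.mulVec b, ?_⟩
    rw [Matrix.mulVec_mulVec, Matrix.mul_nonsing_inv _ (isUnit_iff_ne_zero.2 hdet.ne'),
      Matrix.one_mulVec]
  have hle : ∀ x, 0 ≤ (u - v) x := by
    apply csg_mono hQ ht0 ht
    intro x
    rw [← hA, Matrix.mulVec_sub, hu]
    simp [hv x]
  have hb : (fun x => b x - v k * A x k) = A.mulVec (u - v k • Pi.single k 1) := by
    rw [Matrix.mulVec_sub, hu, Matrix.mulVec_smul]
    ext x
    simp
  rw [hb, ← Matrix.cramer_apply]
  rw [Matrix.cramer_eq_adjugate_mulVec, Matrix.mulVec_mulVec, Matrix.adjugate_mul,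
    Matrix.smul_mulVec, Matrix.one_mulVec]
  have := hle k
  simp only [Pi.sub_apply] at this
  simp only [Pi.smul_apply, Pi.sub_apply, Pi.single_eq_same, smul_eq_mul, mul_one]
  exact mul_nonneg hdet.le this

lemma csg_cramer_nonpos {Q : Matrix K K ℝ} (hQ : ∀ x, Q x ∈ stdSimplex ℝ K) {t : ℝ} (ht0 : 0 ≤ t)
    (ht : t < 1) {v b : K → ℝ} (k : K)
    (hv : ∀ x, b x ≤ ((1 - t • Q).mulVec v) x) :
    ((1 - t • Q).updateCol k (fun x => b x - v k * (1 - t • Q) x k)).det ≤ 0 := by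
  have h := csg_cramer_nonneg hQ ht0 ht (v := -v) (b := -b) k (fun x => by
    rw [Matrix.mulVec_neg]; simpa using hv x)
  have e : (fun x => (-b) x - (-v) k * (1 - t • Q) x k) =
      (-1 : ℝ) • (fun x => b x - v k * (1 - t • Q) x k) := by
    ext x; simp only [Pi.neg_apply, Pi.smul_apply, smul_eq_mul]; ring
  rw [e, Matrix.det_updateCol_smul] at h
  linarith

lemma csg_prod_simplex {I : Type*} [Fintype I] {p : K → I → ℝ}
    (hp : ∀ x, p x ∈ stdSimplex ℝ I) :
    (fun α : K → I => ∏ x, p x (α x)) ∈ stdSimplex ℝ (K → I) := by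
  classical
  refine ⟨fun α => Finset.prod_nonneg fun x _ => (hp x).1 _, ?_⟩
  have := (Finset.prod_univ_sum (fun _ : K => (Finset.univ : Finset I)) (fun x i => p x i)).symm
  rw [Fintype.piFinset_univ] at this
  rw [this]
  simp [(hp _).2]

/-- Multilinear expansion of a determinant whose rows are averages. -/
lemma csg_det_avg {I : Type*} [Fintype I] (p : K → I → ℝ) (B : K → I → K → ℝ) :
    ∑ α : K → I, (∏ x, p x (α x)) * (Matrix.of fun x => B x (α x)).det =
      (Matrix.of fun x x' => ∑ i, p x i * B x i x').det := by
  have h := (Matrix.detRowAlternating (n := K) (R := ℝ)).toMultilinearMap.map_sum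
    (fun x i => p x i • B x i)
  have e : (Matrix.of fun x x' => ∑ i, p x i * B x i x').det =
    (Matrix.detRowAlternating (n := K) (R := ℝ)).toMultilinearMap
      (fun x => ∑ i, p x i • B x i) := by
    change Matrix.det _ = Matrix.det _
    congr 1
    ext x x'
    simp [Matrix.of_apply, Finset.sum_apply]
  rw [e, h]
  refine Finset.sum_congr rfl fun α _ => ?_
  rw [MultilinearMap.map_smul_univ]
  rfl

end Stoch

section Curve

variable {K : Type*} [Fintype K] [DecidableEq K]

/-- The mixed transition matrix. -/
def csgQ {L : Type*} [Fintype L] (q : K → L → Unit → K) (p : K → L → ℝ) : Matrix K K ℝ :=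
  fun x x' => ∑ i, p x i * (if q x i () = x' then 1 else 0)

lemma csgQ_mem {L : Type*} [Fintype L] (q : K → L → Unit → K) {p : K → L → ℝ}
    (hp : ∀ x, p x ∈ stdSimplex ℝ L) (x : K) : csgQ q p x ∈ stdSimplex ℝ K := by
  refine ⟨fun x' => Finset.sum_nonneg fun i _ => mul_nonneg ((hp x).1 i) (by split_ifs <;> simp), ?_⟩
  simp only [csgQ]
  rw [Finset.sum_comm]
  simp [(hp x).2]

lemma csgQ_mulVec {L : Type*} [Fintype L] (q : K → L → Unit → K) (p : K → L → ℝ) (v : K → ℝ)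
    (x : K) : (csgQ q p).mulVec v x = ∑ i, p x i * v (q x i ()) := by
  simp only [Matrix.mulVec, dotProduct, csgQ, Finset.sum_mul]
  rw [Finset.sum_comm]
  refine Finset.sum_congr rfl fun i _ => ?_
  simp

lemma csg_mix {L : Type*} [Fintype L] (q : K → L → Unit → K) (g : K → L → Unit → ℝ)
    {p : K → L → ℝ} (hp : ∀ x, p x ∈ stdSimplex ℝ L) (l z : ℝ) (k : K) :
    ∑ α : K → L, (∏ x, p x (α x)) * csgW q g l z k α (fun _ => ()) =
      ((1 - (1 - l) • csgQ q p).updateCol k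
        (fun x => l * (∑ i, p x i * g x i ()) - z * (1 - (1 - l) • csgQ q p) x k)).det := by
  have h := csg_det_avg p (fun x i x' =>
    if x' = k then l * g x i () - z * ((if x = k then 1 else 0) -
      (1 - l) * (if q x i () = k then 1 else 0))
    else (if x = x' then 1 else 0) - (1 - l) * (if q x i () = x' then 1 else 0))
  have hW : ∀ α : K → L, csgW q g l z k α (fun _ => ()) = (Matrix.of fun x => (fun x i x' =>
    if x' = k then l * g x i () - z * ((if x = k then 1 else 0) -
      (1 - l) * (if q x i () = k then 1 else 0))
    else (if x = x' then 1 else 0) - (1 - l) * (if q x i () = x' then 1 else 0)) x (α x)).det := by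
    intro α
    unfold csgW
    congr 1
    ext x x'
    simp only [Matrix.updateCol_apply, csgA, Matrix.of_apply]
  simp only [hW]
  refine h.trans ?_
  congr 1
  ext x x'
  have hs := (hp x).2
  have key : ∀ x'', ∑ i, p x i * ((if x = x'' then (1 : ℝ) else 0) -
      (1 - l) * (if q x i () = x'' then 1 else 0)) = (1 - (1 - l) • csgQ q p) x x'' := by
    intro x''
    simp only [mul_sub, Finset.sum_sub_distrib, ← Finset.sum_mul, hs, Matrix.sub_apply,
      Matrix.smul_apply, csgQ, Matrix.one_apply, smul_eq_mul, Finset.mul_sum, one_mul]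
    congr 1
    refine Finset.sum_congr rfl fun i _ => ?_
    ring
  simp only [Matrix.updateCol_apply, Matrix.of_apply]
  by_cases hx : x' = k
  · rw [if_pos hx, ← key k]
    rw [Finset.mul_sum, Finset.mul_sum, ← Finset.sum_sub_distrib]
    refine Finset.sum_congr rfl fun i _ => ?_
    rw [if_pos hx]
    ring
  · rw [if_neg hx, ← key x']
    refine Finset.sum_congr rfl fun i _ => ?_
    rw [if_neg hx]

lemma csgA_det_pos {I J : Type*} (q : K → I → J → K) {l : ℝ} (hl : 0 < l)
    (hl1 : l ≤ 1) (α : K → I) (β : K → J) : 0 < (csgA q l α β).det := by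
  have h := csg_det_pos (csgQ_mem (fun x (_ : Unit) (_ : Unit) => q x (α x) (β x))
    (p := fun _ _ => 1) (fun x => ⟨fun _ => zero_le_one, by simp⟩)) (t := 1 - l)
    (by linarith) (by linarith)
  convert h using 2
  ext x x'
  simp [csgA, csgQ, Matrix.one_apply]

lemma csg_curve {I J : Type*} [Fintype I] [Fintype J] (q : K → I → J → K) (g : K → I → J → ℝ)
    (k : K) : ∃ P : Polynomial (Polynomial ℝ), P ≠ 0 ∧ ∀ l : ℝ, 0 < l → l ≤ 1 → ∀ v : K → ℝ,
      CsgShapley q g l v → (P.map (Polynomial.evalRingHom (v k))).eval l = 0 := by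
  classical
  let PW : (K → I) → (K → J) → Polynomial (Polynomial ℝ) := csgW q (fun x i j => Polynomial.C (Polynomial.C (g x i j)))
    Polynomial.X (Polynomial.C Polynomial.X) k
  let PP : Finset (K → I) × Finset (K → J) → Polynomial (Polynomial ℝ) := fun SU => (csgGram SU.1 SU.2 PW).det
  let φ : ℝ → ℝ → Polynomial (Polynomial ℝ) →+* ℝ := fun l z => Polynomial.eval₂RingHom (Polynomial.evalRingHom z) l
  have hφ : ∀ l z SU, φ l z (PP SU) = (csgGram SU.1 SU.2 (csgW q g l z k)).det := by
    intro l z SU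
    simp only [PP]
    rw [RingHom.map_det]
    congr 1
    ext a a'
    simp only [RingHom.mapMatrix_apply, Matrix.map_apply, csgGram, map_add, map_sum, map_mul]
    congr 1
    · refine Finset.sum_congr rfl fun b _ => ?_
      simp only [PW, csgW_map]
      simp [φ]
    · split_ifs <;> simp
  refine ⟨∏ SU, if PP SU = 0 then 1 else PP SU, ?_, ?_⟩
  · rw [Finset.prod_ne_zero_iff]
    intro SU _
    split_ifs with h
    · exact one_ne_zero
    · exact h
  intro l hl hl1 v hv
  have hev : ∀ P : Polynomial (Polynomial ℝ), (P.map (Polynomial.evalRingHom (v k))).eval l = φ l (v k) P := fun P => by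
    simp [φ, Polynomial.eval_map]
  rw [hev, map_prod]
  choose p hp r hr h1 h2 using hv
  have hx := csg_prod_simplex hp
  have hy := csg_prod_simplex hr
  obtain ⟨S, U, hSU, t, ht⟩ := csg_kernel (csgW q g l (v k) k) (fun α β => (csgA q l α β).det)
    (fun α β => csgA_det_pos q hl hl1 α β) hx (fun β => by
      rw [show (∑ α : K → I, (∏ x, p x (α x)) * csgW q g l (v k) k α β) =
        ∑ α : K → I, (∏ x, p x (α x)) * csgW (fun x i (_ : Unit) => q x i (β x))
          (fun x i (_ : Unit) => g x i (β x)) l (v k) k α (fun _ => ()) from rfl, csg_mix _ _ hp]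
      apply csg_cramer_nonneg (csgQ_mem _ hp) (by linarith) (by linarith)
      intro x
      rw [Matrix.sub_mulVec, Matrix.smul_mulVec, Matrix.one_mulVec]
      simp only [Pi.sub_apply, Pi.smul_apply, csgQ_mulVec, smul_eq_mul]
      have := h1 x (β x)
      simp only [mul_add, Finset.sum_add_distrib] at this
      simp only [Finset.mul_sum]
      have e1 : ∑ i, l * (p x i * g x i (β x)) = ∑ i, p x i * (l * g x i (β x)) :=
        Finset.sum_congr rfl fun i _ => by ring
      have e2 : ∑ i, (1 - l) * (p x i * v (q x i (β x))) =
          ∑ i, p x i * ((1 - l) * v (q x i (β x))) :=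
        Finset.sum_congr rfl fun i _ => by ring
      rw [e1, e2]
      linarith) hy (fun α => by
      rw [show (∑ β : K → J, (∏ x, r x (β x)) * csgW q g l (v k) k α β) =
        ∑ β : K → J, (∏ x, r x (β x)) * csgW (fun x j (_ : Unit) => q x (α x) j)
          (fun x j (_ : Unit) => g x (α x) j) l (v k) k β (fun _ => ()) from rfl, csg_mix _ _ hr]
      apply csg_cramer_nonpos (csgQ_mem _ hr) (by linarith) (by linarith)
      intro x
      rw [Matrix.sub_mulVec, Matrix.smul_mulVec, Matrix.one_mulVec]
      simp only [Pi.sub_apply, Pi.smul_apply, csgQ_mulVec, smul_eq_mul]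
      have := h2 x (α x)
      simp only [mul_add, Finset.sum_add_distrib] at this
      simp only [Finset.mul_sum]
      have e1 : ∑ i, l * (r x i * g x (α x) i) = ∑ i, r x i * (l * g x (α x) i) :=
        Finset.sum_congr rfl fun i _ => by ring
      have e2 : ∑ i, (1 - l) * (r x i * v (q x (α x) i)) =
          ∑ i, r x i * ((1 - l) * v (q x (α x) i)) :=
        Finset.sum_congr rfl fun i _ => by ring
      rw [e1, e2]
      linarith)
  refine Finset.prod_eq_zero (Finset.mem_univ (S, U)) ?_
  have hne : PP (S, U) ≠ 0 := by
    intro h0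
    apply ht
    have := hφ l (v k + t) (S, U)
    rw [h0, map_zero] at this
    rw [this]
    congr 2
    ext α β
    exact (csgW_shift q g l (v k) t k α β).symm
  rw [if_neg hne, hφ]
  exact hSU

end Curve

section BV
open MeasureTheory

open Classical in
lemma csg_bv_count {f : ℝ → ℝ} (hf : ContinuousOn f (Set.Ioc 0 1))
    {P : Polynomial (Polynomial ℝ)}
    (hroot : ∀ l ∈ Set.Ioc (0 : ℝ) 1, (P.map (Polynomial.evalRingHom (f l))).eval l = 0)
    {t : ℕ → ℝ} (ht : Antitone t) (htm : ∀ i, t i ∈ Set.Ioc (0 : ℝ) 1) (n : ℕ) (c : ℝ)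
    (hc : P.leadingCoeff.eval c ≠ 0) :
    ((Finset.range n).filter fun i => c ∈ Set.uIoo (f (t (i + 1))) (f (t i))).card
      ≤ P.natDegree := by
  classical
  have hex : ∀ i, ∃ r, c ∈ Set.uIoo (f (t (i + 1))) (f (t i)) →
      t (i + 1) < r ∧ r < t i ∧ f r = c := by
    intro i
    by_cases hi : c ∈ Set.uIoo (f (t (i + 1))) (f (t i))
    · have hle : t (i + 1) ≤ t i := ht (Nat.le_succ i)
      have hsub : Set.uIcc (t (i + 1)) (t i) ⊆ Set.Ioc 0 1 := by
        rw [Set.uIcc_of_le hle]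
        intro y hy
        exact ⟨lt_of_lt_of_le (htm (i + 1)).1 hy.1, hy.2.trans (htm i).2⟩
      obtain ⟨r, hr, hrc⟩ := intermediate_value_uIcc (hf.mono hsub)
        (Set.Ioo_subset_Icc_self hi)
      rw [Set.uIcc_of_le hle] at hr
      refine ⟨r, fun _ => ⟨lt_of_le_of_ne hr.1 ?_, lt_of_le_of_ne hr.2 ?_, hrc⟩⟩
      · rintro rfl
        rw [hrc] at hi
        simp [Set.uIoo] at hi
        linarith
      · rintro rfl
        rw [hrc] at hi
        simp [Set.uIoo] at hi
        linarith
    · exact ⟨0, fun h => absurd h hi⟩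
  choose r hr using hex
  have hne : P.map (Polynomial.evalRingHom c) ≠ 0 := by
    intro h0
    apply hc
    have := congrArg (fun Q => Polynomial.coeff Q P.natDegree) h0
    simpa [Polynomial.coeff_map] using this
  calc _ ≤ (P.map (Polynomial.evalRingHom c)).roots.toFinset.card := by
        refine Finset.card_le_card_of_injOn r ?_ ?_
        · intro i hi
          have hi' : c ∈ Set.uIoo (f (t (i + 1))) (f (t i)) := (Finset.mem_filter.1 hi).2
          obtain ⟨h1, h2, h3⟩ := hr i hi'
          have := hroot (r i) ⟨(htm (i + 1)).1.trans h1, h2.le.trans (htm i).2⟩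
          rw [h3] at this
          simp only [Finset.mem_coe, Multiset.mem_toFinset]
          rw [Polynomial.mem_roots hne]
          exact this
        · intro i hi j hj hij
          have hi' : c ∈ Set.uIoo (f (t (i + 1))) (f (t i)) := (Finset.mem_filter.1 hi).2
          have hj' : c ∈ Set.uIoo (f (t (j + 1))) (f (t j)) := (Finset.mem_filter.1 hj).2
          obtain ⟨h1, h2, h3⟩ := hr i hi'
          obtain ⟨h4, h5, h6⟩ := hr j hj'
          rcases lt_trichotomy i j with h | h | h
          · have : t j ≤ t (i + 1) := ht h
            linarith
          · exact h
          · have : t i ≤ t (j + 1) := ht h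
            linarith
    _ ≤ (P.map (Polynomial.evalRingHom c)).roots.card := Multiset.toFinset_card_le _
    _ ≤ (P.map (Polynomial.evalRingHom c)).natDegree := Polynomial.card_roots' _
    _ ≤ P.natDegree := Polynomial.natDegree_map_le

lemma csg_bv {f : ℝ → ℝ} (hf : ContinuousOn f (Set.Ioc 0 1))
    (hf1 : ∀ l ∈ Set.Ioc (0 : ℝ) 1, f l ∈ Set.Icc (0 : ℝ) 1)
    {P : Polynomial (Polynomial ℝ)} (hP : P ≠ 0)
    (hroot : ∀ l ∈ Set.Ioc (0 : ℝ) 1, (P.map (Polynomial.evalRingHom (f l))).eval l = 0)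
    {t : ℕ → ℝ} (ht : Antitone t) (htm : ∀ i, t i ∈ Set.Ioc (0 : ℝ) 1) (n : ℕ) :
    ∑ i ∈ Finset.range n, |f (t (i + 1)) - f (t i)| ≤ P.natDegree := by
  classical
  have hae : ∀ᵐ c ∂(volume : Measure ℝ), P.leadingCoeff.eval c ≠ 0 := by
    have hfin : ({c : ℝ | P.leadingCoeff.eval c = 0}).Finite := by
      refine (P.leadingCoeff.roots.toFinset.finite_toSet).subset ?_
      intro c hc
      simp only [Finset.mem_coe, Multiset.mem_toFinset]
      rw [Polynomial.mem_roots (Polynomial.leadingCoeff_ne_zero.2 hP)]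
      exact hc
    have := hfin.measure_zero (volume : Measure ℝ)
    rw [ae_iff]
    simpa using this
  have hvol : ∀ i, volume (Set.uIoo (f (t (i + 1))) (f (t i))) =
      ENNReal.ofReal |f (t (i + 1)) - f (t i)| := by
    intro i
    rw [Set.uIoo, Real.volume_Ioo, max_sub_min_eq_abs', abs_sub_comm]
    try rw [abs_sub_comm]
  have key : ∑ i ∈ Finset.range n, volume (Set.uIoo (f (t (i + 1))) (f (t i))) ≤
      (P.natDegree : ENNReal) := by
    calc _ = ∑ i ∈ Finset.range n, ∫⁻ c, (Set.uIoo (f (t (i + 1))) (f (t i))).indicator 1 c := by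
          refine Finset.sum_congr rfl fun i _ => ?_
          rw [lintegral_indicator_one]
          exact measurableSet_Ioo
      _ = ∫⁻ c, ∑ i ∈ Finset.range n, (Set.uIoo (f (t (i + 1))) (f (t i))).indicator 1 c := by
          rw [lintegral_finsetSum]
          intro i _
          exact measurable_one.indicator measurableSet_Ioo
      _ ≤ ∫⁻ c, (Set.Icc (0 : ℝ) 1).indicator (fun _ => (P.natDegree : ENNReal)) c := by
          apply lintegral_mono_ae
          filter_upwards [hae] with c hc
          by_cases hc1 : c ∈ Set.Icc (0 : ℝ) 1
          · rw [Set.indicator_of_mem hc1]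
            have := csg_bv_count hf hroot ht htm n c hc
            simp only [Set.indicator_apply, Pi.one_apply]
            rw [Finset.sum_boole]
            exact_mod_cast this
          · rw [Set.indicator_of_notMem hc1]
            refine le_of_eq (Finset.sum_eq_zero fun i _ => Set.indicator_of_notMem ?_ _)
            intro hi
            apply hc1
            have h1 := hf1 _ (htm i)
            have h2 := hf1 _ (htm (i + 1))
            exact ⟨(le_min h2.1 h1.1).trans hi.1.le, hi.2.le.trans (max_le h2.2 h1.2)⟩
      _ = (P.natDegree : ENNReal) := by
          rw [lintegral_indicator_const measurableSet_Icc]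
          simp
  simp only [hvol] at key
  rw [← ENNReal.ofReal_sum_of_nonneg (fun _ _ => abs_nonneg _), ← ENNReal.ofReal_natCast,
    ENNReal.ofReal_le_ofReal_iff (Nat.cast_nonneg _)] at key
  exact key

end BV

section Seq

lemma csg_step {K : Type*} [Fintype K] {V : ℝ → K → ℝ}
    (hV : ∀ k, ContinuousOn (fun l => V l k) (Set.Ioc 0 1)) {e : ℝ} (he : 0 < e) (he1 : e < 1)
    (a : ℝ) (ha : a ∈ Set.Ioc (0 : ℝ) 1) :
    ∃ b ∈ Set.Ioc (0 : ℝ) 1, b ≤ a ∧ (1 - e) * a ≤ b ∧ (∀ k, |V b k - V a k| ≤ e * a) ∧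
      e * a ≤ (a - b) + ∑ k, |V b k - V a k| := by
  have hle : (1 - e) * a ≤ a := by nlinarith [ha.1]
  have hpos : 0 < (1 - e) * a := mul_pos (by linarith) ha.1
  have hsub : Set.Icc ((1 - e) * a) a ⊆ Set.Ioc 0 1 := fun y hy =>
    ⟨lt_of_lt_of_le hpos hy.1, hy.2.trans ha.2⟩
  have hsing : ∀ b, (∑ k, |V b k - V a k|) ≤ e * a → ∀ k, |V b k - V a k| ≤ e * a :=
    fun b hb k => (Finset.single_le_sum (f := fun k => |V b k - V a k|)
      (fun _ _ => abs_nonneg _) (Finset.mem_univ k)).trans hb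
  by_cases h : ∑ k, |V ((1 - e) * a) k - V a k| ≤ e * a
  · refine ⟨(1 - e) * a, hsub ⟨le_rfl, hle⟩, hle, le_rfl, hsing _ h, ?_⟩
    have : 0 ≤ ∑ k, |V ((1 - e) * a) k - V a k| := Finset.sum_nonneg fun _ _ => abs_nonneg _
    nlinarith
  · push Not at h
    have hc : ContinuousOn (fun b => ∑ k, |V b k - V a k|) (Set.Icc ((1 - e) * a) a) := by
      refine continuousOn_finsetSum _ fun k _ => ?_
      exact (((hV k).mono hsub).sub continuousOn_const).abs
    have h0 : e * a ∈ Set.Icc (∑ k, |V a k - V a k|) (∑ k, |V ((1 - e) * a) k - V a k|) := by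
      refine ⟨?_, h.le⟩
      simpa using (mul_pos he ha.1).le
    obtain ⟨b, hb, hbe⟩ := intermediate_value_Icc' hle hc h0
    refine ⟨b, hsub hb, hb.2, hb.1, hsing _ hbe.le, ?_⟩
    simp only at hbe
    rw [hbe]
    linarith [hb.2]

lemma csg_seq {K : Type*} [Fintype K] {V : ℝ → K → ℝ}
    (hV : ∀ k, ContinuousOn (fun l => V l k) (Set.Ioc 0 1))
    (hbv : ∀ k, ∃ D : ℝ, ∀ t : ℕ → ℝ, Antitone t → (∀ i, t i ∈ Set.Ioc (0 : ℝ) 1) →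
      ∀ n, ∑ i ∈ Finset.range n, |V (t (i + 1)) k - V (t i) k| ≤ D)
    {e : ℝ} (he : 0 < e) (he1 : e < 1) :
    ∃ t : ℕ → ℝ, Antitone t ∧ (∀ i, t i ∈ Set.Ioc (0 : ℝ) 1) ∧
      (∀ i, (1 - e) * t i ≤ t (i + 1)) ∧ (∀ i k, |V (t (i + 1)) k - V (t i) k| ≤ e * t i) ∧
      Summable t := by
  choose b hb hba hb1 hb2 hb3 using csg_step hV he he1
  let T : ℕ → Set.Ioc (0 : ℝ) 1 := fun n =>
    Nat.rec ⟨1, by simp⟩ (fun _ a => ⟨b a a.2, hb a a.2⟩) n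
  have hT : ∀ i, (T (i + 1) : ℝ) = b (T i).1 (T i).2 := fun i => rfl
  have hanti : Antitone (fun i => (T i).1 : ℕ → ℝ) := antitone_nat_of_succ_le fun i => by
    simp only [hT]
    exact hba _ _
  refine ⟨fun i => (T i).1, hanti, fun i => (T i).2, fun i => ?_, fun i k => ?_, ?_⟩
  · simp only [hT]
    exact hb1 _ _
  · simp only [hT]
    exact hb2 _ _ k
  · choose D hD using hbv
    refine summable_of_sum_range_le (c := (1 + ∑ k, D k) / e) (fun i => (T i).2.1.le) fun n => ?_
    rw [le_div_iff₀ he, mul_comm, Finset.mul_sum]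
    calc ∑ i ∈ Finset.range n, e * (T i).1
        ≤ ∑ i ∈ Finset.range n, (((T i).1 - (T (i + 1)).1) +
          ∑ k, |V (T (i + 1)).1 k - V (T i).1 k|) := by
          refine Finset.sum_le_sum fun i _ => ?_
          rw [hT]
          exact hb3 (T i).1 (T i).2
      _ ≤ 1 + ∑ k, D k := by
          rw [Finset.sum_add_distrib, Finset.sum_range_sub', Finset.sum_comm]
          refine add_le_add ?_ (Finset.sum_le_sum fun k _ => hD k _ hanti (fun i => (T i).2) n)
          have := (T n).2.1
          have := (T 0).2.2
          linarith

end Seq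

section MN

lemma csg_pmf {I : Type*} [Fintype I] {p : I → ℝ} (hp : p ∈ stdSimplex ℝ I) :
    ∃ μ : PMF I, ∀ i, (μ i).toReal = p i := by
  refine ⟨PMF.ofFintype (fun i => ENNReal.ofReal (p i)) ?_, fun i => ?_⟩
  · rw [← ENNReal.ofReal_sum_of_nonneg fun i _ => hp.1 i, hp.2, ENNReal.ofReal_one]
  · rw [PMF.ofFintype_apply, ENNReal.toReal_ofReal (hp.1 i)]

lemma csg_pmf_mem {I : Type*} [Fintype I] (μ : PMF I) :
    (fun i => (μ i).toReal) ∈ stdSimplex ℝ I := by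
  refine ⟨fun i => ENNReal.toReal_nonneg, ?_⟩
  have h := μ.tsum_coe
  rw [tsum_fintype] at h
  rw [← ENNReal.toReal_sum fun i _ => μ.apply_ne_top i, h, ENNReal.toReal_one]

/-- The tail integral. -/
def csgPhi (lam T : ℕ → ℝ) (u : ℝ) : ℝ := (⌊u⌋₊ + 1 - u) * lam ⌊u⌋₊ + T (⌊u⌋₊ + 1)

lemma csg_floor {u u' : ℝ} (hu : 0 ≤ u) (hu' : 0 ≤ u') (h : |u' - u| ≤ 1) :
    ⌊u'⌋₊ = ⌊u⌋₊ ∨ ⌊u'⌋₊ = ⌊u⌋₊ + 1 ∨ ⌊u⌋₊ = ⌊u'⌋₊ + 1 := by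
  have h1 := Nat.floor_le hu
  have h2 := Nat.lt_floor_add_one u
  have h3 := Nat.floor_le hu'
  have h4 := Nat.lt_floor_add_one u'
  rw [abs_le] at h
  have h5 : ⌊u'⌋₊ < ⌊u⌋₊ + 2 := by
    have : (⌊u'⌋₊ : ℝ) < ((⌊u⌋₊ + 2 : ℕ) : ℝ) := by push_cast; linarith
    exact_mod_cast this
  have h6 : ⌊u⌋₊ < ⌊u'⌋₊ + 2 := by
    have : (⌊u⌋₊ : ℝ) < ((⌊u'⌋₊ + 2 : ℕ) : ℝ) := by push_cast; linarith
    exact_mod_cast this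
  omega

section
variable {lam T : ℕ → ℝ} {e : ℝ}

lemma csg_phi_diff (h0 : ∀ i, 0 < lam i)
    (hanti : ∀ i, lam (i + 1) ≤ lam i) (hlam : ∀ i, (1 - e) * lam i ≤ lam (i + 1)) (he : 0 ≤ e) (he2 : e ≤ 1 / 2)
    (hT : ∀ n, T n = lam n + T (n + 1)) {u u' : ℝ}
    (hu : 0 ≤ u) (hu' : 0 ≤ u') (h : |u' - u| ≤ 1) :
    (u' - u) * lam ⌊u⌋₊ - 2 * e * lam ⌊u⌋₊ ≤ csgPhi lam T u - csgPhi lam T u' := by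
  have h1 := Nat.floor_le hu
  have h2 := Nat.lt_floor_add_one u
  have h3 := Nat.floor_le hu'
  have h4 := Nat.lt_floor_add_one u'
  unfold csgPhi
  rcases csg_floor hu hu' h with hf | hf | hf
  · rw [hf]
    have := mul_nonneg he (h0 ⌊u⌋₊).le
    nlinarith
  · rw [hf] at h3 h4 ⊢
    rw [hT (⌊u⌋₊ + 1)]
    push_cast at *
    generalize (⌊u⌋₊ : ℝ) = m at *
    have a1 := hlam ⌊u⌋₊
    have a2 := h0 ⌊u⌋₊
    have a3 := hanti ⌊u⌋₊
    generalize lam ⌊u⌋₊ = x at *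
    generalize lam (⌊u⌋₊ + 1) = y at *
    have : (u' - m - 1) * (x - y) ≤ 1 * (e * x) :=
      mul_le_mul (by linarith) (by linarith) (by linarith) (by linarith)
    nlinarith [mul_nonneg he a2.le]
  · rw [hf] at h1 h2 ⊢
    rw [hT (⌊u'⌋₊ + 1)]
    push_cast at *
    generalize (⌊u'⌋₊ : ℝ) = m at *
    have a1 := hlam ⌊u'⌋₊
    have a2 := h0 ⌊u'⌋₊
    have a3 := hanti ⌊u'⌋₊
    have a4 := h0 (⌊u'⌋₊ + 1)
    generalize lam ⌊u'⌋₊ = x at *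
    generalize lam (⌊u'⌋₊ + 1) = y at *
    have a5 : x ≤ 2 * y := by nlinarith
    have : (m + 1 - u') * (x - y) ≤ 1 * (2 * e * y) :=
      mul_le_mul (by linarith) (by nlinarith) (by linarith) (by linarith)
    nlinarith

lemma csg_lam_adj (h0 : ∀ i, 0 < lam i)
    (hanti : ∀ i, lam (i + 1) ≤ lam i) (hlam : ∀ i, (1 - e) * lam i ≤ lam (i + 1)) (he2 : e ≤ 1 / 2)
    {u u' : ℝ}
    (hu : 0 ≤ u) (hu' : 0 ≤ u') (h : |u' - u| ≤ 1) : lam ⌊u'⌋₊ ≤ 2 * lam ⌊u⌋₊ := by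
  rcases csg_floor hu hu' h with hf | hf | hf
  · rw [hf]
    linarith [h0 ⌊u⌋₊]
  · rw [hf]
    linarith [h0 ⌊u⌋₊, hanti ⌊u⌋₊]
  · rw [hf]
    nlinarith [h0 ⌊u'⌋₊, hlam ⌊u'⌋₊]

lemma csg_V_adj (h0 : ∀ i, 0 < lam i)
    (hanti : ∀ i, lam (i + 1) ≤ lam i) (hlam : ∀ i, (1 - e) * lam i ≤ lam (i + 1)) (he : 0 ≤ e) (he2 : e ≤ 1 / 2)
    {V : ℕ → ℝ} (hV : ∀ i, |V (i + 1) - V i| ≤ e * lam i) {u u' : ℝ}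
    (hu : 0 ≤ u) (hu' : 0 ≤ u') (h : |u' - u| ≤ 1) :
    |V ⌊u'⌋₊ - V ⌊u⌋₊| ≤ 2 * e * lam ⌊u⌋₊ := by
  have hla := csg_lam_adj h0 hanti hlam he2 hu hu' h
  have := mul_nonneg he (h0 ⌊u⌋₊).le
  rcases csg_floor hu hu' h with hf | hf | hf
  · rw [hf, sub_self, abs_zero]
    linarith
  · rw [hf]
    linarith [hV ⌊u⌋₊]
  · have := hV ⌊u'⌋₊
    rw [← hf, abs_sub_comm] at this
    nlinarith

lemma csg_phi_nonneg (h0 : ∀ i, 0 < lam i)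
    (hT0 : ∀ n, 0 ≤ T n) (u : ℝ) :
    0 ≤ csgPhi lam T u := by
  have h2 := Nat.lt_floor_add_one u
  exact add_nonneg (mul_nonneg (by linarith) (h0 _).le) (hT0 _)

end

end MN
section MN2

lemma csg_sum2 {I J : Type*} [Fintype I] [Fintype J] {p : I → ℝ} {r : J → ℝ}
    (hp : p ∈ stdSimplex ℝ I) (hr : r ∈ stdSimplex ℝ J) (c : ℝ) :
    ∑ i, ∑ j, p i * r j * c = c := by
  simp only [← Finset.sum_mul, ← Finset.mul_sum, hr.2, mul_one, hp.2, one_mul]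

lemma csg_MN {K I J : Type*} [Fintype I] [Fintype J]
    (q : K → I → J → K) (g : K → I → J → ℝ) (hg : ∀ x i j, g x i j ∈ Set.Icc (0 : ℝ) 1)
    {lam T : ℕ → ℝ} {V : ℕ → K → ℝ} {e η : ℝ}
    (hV01 : ∀ i x, V i x ∈ Set.Icc (0 : ℝ) 1)
    (h0 : ∀ i, 0 < lam i) (h1 : ∀ i, lam i ≤ 1)
    (hanti : ∀ i, lam (i + 1) ≤ lam i) (hlam : ∀ i, (1 - e) * lam i ≤ lam (i + 1)) (he : 0 ≤ e)
    (he2 : e ≤ 1 / 2) (hη : 0 < η) (hη1 : η ≤ 1) (heη : 12 * e ≤ η)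
    (hVd : ∀ i x, |V (i + 1) x - V i x| ≤ e * lam i)
    (hT : ∀ n, T n = lam n + T (n + 1)) (hT0 : ∀ n, 0 ≤ T n)
    (hS : ∀ n x, ∃ p ∈ stdSimplex ℝ I, ∀ j, V n x ≤
      ∑ i, p i * (lam n * g x i j + (1 - lam n) * V n (q x i j)))
    (M : ℕ) (x₁ : K) :
    ∃ (σ : List (I × J) → PMF I) (C : ℝ), ∀ (τ : List (I × J) → PMF J) (n : ℕ),
      n * (V M x₁ - 2 * T M - 2 * η) - C ≤ expPay q g σ τ n x₁ [] := by
  choose p hp hpS using hS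
  choose μ hμ using fun n x => csg_pmf (hp n x)
  let upd : K → ℝ → I → J → ℝ := fun x u i j =>
    max (M : ℝ) (u + (g x i j - V ⌊u⌋₊ (q x i j) + η) / 2)
  let step : K × ℝ → I × J → K × ℝ := fun s a => (q s.1 a.1 a.2, upd s.1 s.2 a.1 a.2)
  let st : List (I × J) → K × ℝ := fun h => h.foldl step (x₁, (M : ℝ))
  let Y : K → ℝ → ℝ := fun x u => V ⌊u⌋₊ x - 2 * csgPhi lam T u
  let A : ℝ := 8 / (η * lam M)
  have hA : 0 ≤ A := div_nonneg (by norm_num) (mul_pos hη (h0 M)).le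
  have hM0 : (0 : ℝ) ≤ M := Nat.cast_nonneg M
  have hupdM : ∀ x u i j, (M : ℝ) ≤ upd x u i j := fun x u i j => le_max_left _ _
  have hupd1 : ∀ x u i j, (M : ℝ) ≤ u → |upd x u i j - u| ≤ 1 := by
    intro x u i j hu
    have a1 := hg x i j
    have a2 := hV01 ⌊u⌋₊ (q x i j)
    rw [abs_le]
    constructor
    · have : u + (g x i j - V ⌊u⌋₊ (q x i j) + η) / 2 ≤ upd x u i j := le_max_right _ _
      linarith [a1.1, a2.2]
    · have : upd x u i j ≤ u + 1 := max_le (by linarith) (by linarith [a1.2, a2.1])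
      linarith
  -- drift of the potential
  have hdrift : ∀ x u i j, (M : ℝ) ≤ u →
      Y x u + (lam ⌊u⌋₊ * g x i j + (1 - lam ⌊u⌋₊) * V ⌊u⌋₊ (q x i j) - V ⌊u⌋₊ x)
        + η / 2 * lam ⌊u⌋₊ ≤ Y (q x i j) (upd x u i j) := by
    intro x u i j hu
    have hu0 : 0 ≤ u := hM0.trans hu
    have hu0' : 0 ≤ upd x u i j := hM0.trans (hupdM x u i j)
    have b1 := csg_phi_diff h0 hanti hlam he he2 hT hu0 hu0' (hupd1 x u i j hu)
    have b2 := csg_V_adj h0 hanti hlam he he2 (V := fun n => V n (q x i j))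
      (fun n => hVd n _) hu0 hu0' (hupd1 x u i j hu)
    have b3 : u + (g x i j - V ⌊u⌋₊ (q x i j) + η) / 2 ≤ upd x u i j := le_max_right _ _
    have b4 := (abs_le.1 b2).1
    have b5 : (g x i j - V ⌊u⌋₊ (q x i j) + η) / 2 * lam ⌊u⌋₊ ≤ (upd x u i j - u) * lam ⌊u⌋₊ :=
      mul_le_mul_of_nonneg_right (by linarith) (h0 _).le
    have b6 : 12 * e * lam ⌊u⌋₊ ≤ η * lam ⌊u⌋₊ := mul_le_mul_of_nonneg_right heη (h0 _).le
    simp only [Y]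
    linarith
  have hpay : ∀ x u i j, (M : ℝ) ≤ u →
      Y (q x i j) (upd x u i j) + 2 * (upd x u i j - u) - 2 * η - 4 / lam M * lam ⌊u⌋₊
        ≤ g x i j := by
    intro x u i j hu
    have hu0 : 0 ≤ u := hM0.trans hu
    have hu0' : 0 ≤ upd x u i j := hM0.trans (hupdM x u i j)
    have b0 := csg_phi_nonneg h0 hT0 (upd x u i j)
    have b2 := csg_V_adj h0 hanti hlam he he2 (V := fun n => V n (q x i j))
      (fun n => hVd n _) hu0 hu0' (hupd1 x u i j hu)
    have b3 := csg_lam_adj h0 hanti hlam he2 hu0 hu0' (hupd1 x u i j hu)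
    have b4 := (abs_le.1 b2).2
    have b5 : e * lam ⌊u⌋₊ ≤ e * 1 := mul_le_mul_of_nonneg_left (h1 _) he
    have b6 : 0 ≤ 4 / lam M * lam ⌊u⌋₊ := mul_nonneg (div_nonneg (by norm_num) (h0 _).le) (h0 _).le
    simp only [Y]
    rcases le_total (M : ℝ) (u + (g x i j - V ⌊u⌋₊ (q x i j) + η) / 2) with hc | hc
    · have : upd x u i j = u + (g x i j - V ⌊u⌋₊ (q x i j) + η) / 2 := max_eq_right hc
      rw [this] at b4 b0 ⊢
      linarith
    · have : upd x u i j = M := max_eq_left hc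
      rw [this] at b3 b0 ⊢
      rw [Nat.floor_natCast] at b3 ⊢
      have b7 : 2 ≤ 4 / lam M * lam ⌊u⌋₊ := by
        rw [div_mul_eq_mul_div, le_div_iff₀ (h0 M)]
        linarith
      linarith [(hV01 M (q x i j)).2, (hg x i j).1]
  refine ⟨fun h => μ ⌊(st h).2⌋₊ (st h).1, A * (1 - Y x₁ M), fun τ => ?_⟩
  have main : ∀ n h, (M : ℝ) ≤ (st h).2 →
      n * Y (st h).1 (st h).2 - n * (2 * η) - A * (1 - Y (st h).1 (st h).2)
        - 2 * ((st h).2 - M) ≤ expPay q g (fun h => μ ⌊(st h).2⌋₊ (st h).1) τ n (st h).1 h := by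
    intro n
    induction n with
    | zero =>
      intro h hM
      have : Y (st h).1 (st h).2 ≤ 1 := by
        have := csg_phi_nonneg h0 hT0 (st h).2
        simp only [Y]
        linarith [(hV01 ⌊(st h).2⌋₊ (st h).1).2]
      simp only [expPay, Nat.cast_zero]
      nlinarith [mul_nonneg hA (sub_nonneg.2 this)]
    | succ n ih =>
      intro h hM
      have hst : ∀ i j, st (h ++ [(i, j)]) = (q (st h).1 i j, upd (st h).1 (st h).2 i j) := by
        intro i j
        simp only [st, List.foldl_append, List.foldl_cons, List.foldl_nil, step]
      simp only [expPay, hμ]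
      generalize hx : (st h).1 = x at *
      generalize hu : (st h).2 = u at *
      have hr := csg_pmf_mem (τ h)
      set r : J → ℝ := fun j => ((τ h) j).toReal with hrdef
      have hP := hp ⌊u⌋₊ x
      have hPS := hpS ⌊u⌋₊ x
      generalize p ⌊u⌋₊ x = P at *
      change _ ≤ ∑ i, ∑ j, P i * r j * (g x i j + _)
      have hbase : ∀ i j, (n + 1 : ℝ) * Y x u - (n + 1) * (2 * η) - A * (1 - Y x u) - 2 * (u - M)
          + (n + 1 + A) * (lam ⌊u⌋₊ * g x i j + (1 - lam ⌊u⌋₊) * V ⌊u⌋₊ (q x i j) - V ⌊u⌋₊ x)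
          ≤ g x i j + expPay q g (fun h => μ ⌊(st h).2⌋₊ (st h).1) τ n (q x i j)
              (h ++ [(i, j)]) := by
        intro i j
        have c1 := ih (h ++ [(i, j)]) (by rw [hst]; exact hupdM _ _ _ _)
        rw [hst] at c1
        simp only at c1
        have c2 := hdrift x u i j hM
        have c3 := hpay x u i j hM
        have c4 : (n + 1 + A) * (Y x u + (lam ⌊u⌋₊ * g x i j +
            (1 - lam ⌊u⌋₊) * V ⌊u⌋₊ (q x i j) - V ⌊u⌋₊ x) + η / 2 * lam ⌊u⌋₊) ≤
            (n + 1 + A) * Y (q x i j) (upd x u i j) :=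
          mul_le_mul_of_nonneg_left c2 (by positivity)
        have c5 : A * (η / 2 * lam ⌊u⌋₊) = 4 / lam M * lam ⌊u⌋₊ := by
          simp only [A]
          have := (h0 M).ne'
          have := hη.ne'
          field_simp
          ring
        have c6 : 0 ≤ (n + 1 : ℝ) * (η / 2 * lam ⌊u⌋₊) :=
          mul_nonneg (by positivity) (mul_nonneg (by linarith) (h0 _).le)
        linarith
      have hsum : ∑ i, ∑ j, P i * r j *
          (lam ⌊u⌋₊ * g x i j + (1 - lam ⌊u⌋₊) * V ⌊u⌋₊ (q x i j) - V ⌊u⌋₊ x) =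
          ∑ j, r j * ((∑ i, P i * (lam ⌊u⌋₊ * g x i j + (1 - lam ⌊u⌋₊) * V ⌊u⌋₊ (q x i j)))
            - V ⌊u⌋₊ x) := by
        rw [Finset.sum_comm]
        refine Finset.sum_congr rfl fun j _ => ?_
        rw [mul_sub, Finset.mul_sum]
        simp only [mul_sub, Finset.sum_sub_distrib]
        congr 1
        · exact Finset.sum_congr rfl fun i _ => by ring
        · rw [← Finset.sum_mul, ← Finset.sum_mul, hP.2, one_mul]
      have hnn : 0 ≤ ∑ i, ∑ j, P i * r j *
          (lam ⌊u⌋₊ * g x i j + (1 - lam ⌊u⌋₊) * V ⌊u⌋₊ (q x i j) - V ⌊u⌋₊ x) := by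
        rw [hsum]
        exact Finset.sum_nonneg fun j _ => mul_nonneg (hr.1 j) (by linarith [hPS j])
      have hle : ∑ i, ∑ j, P i * r j * ((n + 1 : ℝ) * Y x u - (n + 1) * (2 * η)
          - A * (1 - Y x u) - 2 * (u - M)
          + (n + 1 + A) * (lam ⌊u⌋₊ * g x i j + (1 - lam ⌊u⌋₊) * V ⌊u⌋₊ (q x i j) - V ⌊u⌋₊ x))
          ≤ ∑ i, ∑ j, P i * r j * (g x i j + expPay q g (fun h => μ ⌊(st h).2⌋₊ (st h).1) τ n
            (q x i j) (h ++ [(i, j)])) :=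
        Finset.sum_le_sum fun i _ => Finset.sum_le_sum fun j _ =>
          mul_le_mul_of_nonneg_left (hbase i j) (mul_nonneg (hP.1 i) (hr.1 j))
      refine le_trans ?_ hle
      simp only [mul_add (P _ * r _), Finset.sum_add_distrib]
      rw [csg_sum2 hP hr]
      have : ∑ i, ∑ j, P i * r j * ((n + 1 + A) *
          (lam ⌊u⌋₊ * g x i j + (1 - lam ⌊u⌋₊) * V ⌊u⌋₊ (q x i j) - V ⌊u⌋₊ x)) =
          (n + 1 + A) * ∑ i, ∑ j, P i * r j *
          (lam ⌊u⌋₊ * g x i j + (1 - lam ⌊u⌋₊) * V ⌊u⌋₊ (q x i j) - V ⌊u⌋₊ x) := by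
        rw [Finset.mul_sum]
        refine Finset.sum_congr rfl fun i _ => ?_
        rw [Finset.mul_sum]
        exact Finset.sum_congr rfl fun j _ => by ring
      rw [this]
      have : 0 ≤ (n + 1 + A) * ∑ i, ∑ j, P i * r j *
          (lam ⌊u⌋₊ * g x i j + (1 - lam ⌊u⌋₊) * V ⌊u⌋₊ (q x i j) - V ⌊u⌋₊ x) :=
        mul_nonneg (by positivity) hnn
      push_cast
      linarith
  intro n
  have := main n [] le_rfl
  simp only [st, List.foldl_nil] at this
  refine le_trans (le_of_eq ?_) this
  have hY : Y x₁ M = V M x₁ - 2 * T M := by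
    simp only [Y, csgPhi, Nat.floor_natCast]
    rw [hT M]
    ring
  rw [hY]
  ring

end MN2

section FiniteGame

lemma csg_finite_half {K I J : Type*} [Fintype I] [Fintype J]
    (q : K → I → J → K) (g : K → I → J → ℝ) (hg : ∀ x i j, g x i j ∈ Set.Icc (0 : ℝ) 1)
    {lam T : ℕ → ℝ} {V : ℕ → K → ℝ} {e η : ℝ}
    (hV01 : ∀ i x, V i x ∈ Set.Icc (0 : ℝ) 1)
    (h0 : ∀ i, 0 < lam i) (h1 : ∀ i, lam i ≤ 1)
    (hanti : ∀ i, lam (i + 1) ≤ lam i) (hlam : ∀ i, (1 - e) * lam i ≤ lam (i + 1)) (he : 0 ≤ e)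
    (he2 : e ≤ 1 / 2) (hη : 0 < η) (hη1 : η ≤ 1) (heη : 12 * e ≤ η)
    (hVd : ∀ i x, |V (i + 1) x - V i x| ≤ e * lam i)
    (hT : ∀ n, T n = lam n + T (n + 1)) (hT0 : ∀ n, 0 ≤ T n)
    (hS : ∀ n x, ∃ p ∈ stdSimplex ℝ I, ∀ j, V n x ≤
      ∑ i, p i * (lam n * g x i j + (1 - lam n) * V n (q x i j)))
    (M : ℕ) (hM : T M ≤ η) (x₁ : K) :
    ∃ (σ : List (I × J) → PMF I) (N : ℕ), ∀ (τ : List (I × J) → PMF J), ∀ n ≥ N,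
      0 < n ∧ n * (V M x₁ - 5 * η) ≤ expPay q g σ τ n x₁ [] := by
  obtain ⟨σ, C, h⟩ := csg_MN q g hg hV01 h0 h1 hanti hlam he he2 hη hη1 heη hVd hT hT0 hS M x₁
  obtain ⟨N, hN⟩ := exists_nat_ge (C / η)
  refine ⟨σ, N + 1, fun τ n hn => ⟨by omega, ?_⟩⟩
  have h2 : (N : ℝ) ≤ n := by exact_mod_cast (by omega : N ≤ n)
  have h3 : C ≤ n * η := by
    rw [div_le_iff₀ hη] at hN
    nlinarith
  have h4 : (n : ℝ) * T M ≤ n * η := mul_le_mul_of_nonneg_left hM (Nat.cast_nonneg n)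
  have := h τ n
  linarith

lemma csg_expPay_swap {K I J : Type*} [Fintype I] [Fintype J]
    (q : K → I → J → K) (g : K → I → J → ℝ) (σ : List (I × J) → PMF I)
    (τ' : List (J × I) → PMF J) (n : ℕ) (x : K) (h : List (I × J)) :
    expPay (fun x j i => q x i j) (fun x j i => 1 - g x i j) τ'
      (fun h => σ (h.map Prod.swap)) n x (h.map Prod.swap) =
    n - expPay q g σ (fun h => τ' (h.map Prod.swap)) n x h := by
  induction n generalizing x h with
  | zero => simp [expPay]
  | succ n ih =>
    simp only [expPay]
    have hh : (h.map Prod.swap).map Prod.swap = h := by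
      rw [List.map_map, Prod.swap_swap_eq, List.map_id]
    have ih' : ∀ i j, expPay (fun x j i => q x i j) (fun x j i => 1 - g x i j) τ'
        (fun h => σ (h.map Prod.swap)) n (q x i j) (h.map Prod.swap ++ [(j, i)]) =
        n - expPay q g σ (fun h => τ' (h.map Prod.swap)) n (q x i j) (h ++ [(i, j)]) := by
      intro i j
      rw [← ih]
      simp
    simp only [ih', hh]
    rw [Finset.sum_comm]
    have := csg_sum2 (csg_pmf_mem (σ h)) (csg_pmf_mem (τ' (h.map Prod.swap))) ((n : ℝ) + 1)
    push_cast
    rw [← this, ← Finset.sum_sub_distrib]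
    refine Finset.sum_congr rfl fun i _ => ?_
    rw [← Finset.sum_sub_distrib]
    refine Finset.sum_congr rfl fun j _ => ?_
    ring

lemma csg_finite {K I J : Type*} [Fintype K] [Fintype I] [Fintype J] [Nonempty I] [Nonempty J]
    (q : K → I → J → K) (g : K → I → J → ℝ) (hg : ∀ x i j, g x i j ∈ Set.Icc (0 : ℝ) 1)
    (x₁ : K) {ε : ℝ} (hε : 0 < ε) :
    ∃ w : ℝ, (∃ (σ : List (I × J) → PMF I) (N : ℕ), ∀ (τ : List (I × J) → PMF J), ∀ n ≥ N,
        w - ε ≤ gamePayoff q g σ τ x₁ n) ∧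
      (∃ (τ : List (I × J) → PMF J) (N : ℕ), ∀ (σ : List (I × J) → PMF I), ∀ n ≥ N,
        gamePayoff q g σ τ x₁ n ≤ w + ε) := by
  classical
  have hex : ∀ l : ℝ, ∃ v : K → ℝ, l ∈ Set.Ioc (0 : ℝ) 1 → CsgShapley q g l v := by
    intro l
    by_cases hl : l ∈ Set.Ioc (0 : ℝ) 1
    · obtain ⟨v, hv⟩ := csg_shapley_exists q g hl.1 hl.2
      exact ⟨v, fun _ => hv⟩
    · exact ⟨0, fun h => absurd h hl⟩
  choose V hV using hex
  have hV01 : ∀ l ∈ Set.Ioc (0 : ℝ) 1, ∀ k, V l k ∈ Set.Icc (0 : ℝ) 1 := fun l hl k =>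
    csg_shapley_mem hg hl.1 hl.2 (hV l hl) k
  have hlip : ∀ l ∈ Set.Ioc (0 : ℝ) 1, ∀ a ∈ Set.Ioc (0 : ℝ) 1, ∀ k,
      a * |V l k - V a k| ≤ 2 * |l - a| := by
    intro l hl a ha k
    have h1 := csg_shapley_lip hg hl.1 hl.2 ha.1 ha.2 (hV l hl) (hV a ha) k
    have h2 := csg_shapley_lip hg ha.1 ha.2 hl.1 hl.2 (hV a ha) (hV l hl) k
    rw [abs_sub_comm a l] at h2
    have h3 := hV01 l hl k
    have h4 := hV01 a ha k
    have h5 := neg_abs_le (l - a)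
    have h6 := abs_nonneg (l - a)
    rcases abs_cases (V l k - V a k) with ⟨h, _⟩ | ⟨h, h'⟩
    · rw [h]
      linarith
    · rw [h]
      have : (a - l) * (V a k - V l k) ≤ |l - a| * 1 :=
        mul_le_mul (by linarith) (by linarith [h3.1, h4.2]) (by linarith) h6
      linarith
  have hcont : ∀ k, ContinuousOn (fun l => V l k) (Set.Ioc 0 1) := by
    intro k
    rw [Metric.continuousOn_iff]
    intro a ha δ hδ
    refine ⟨δ * a / 2, by have := ha.1; positivity, fun l hl hla => ?_⟩
    rw [Real.dist_eq] at hla ⊢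
    have := hlip l hl a ha k
    have ha0 := ha.1
    by_contra hcon
    push Not at hcon
    nlinarith
  have hbv : ∀ k, ∃ D : ℝ, ∀ t : ℕ → ℝ, Antitone t → (∀ i, t i ∈ Set.Ioc (0 : ℝ) 1) →
      ∀ n, ∑ i ∈ Finset.range n, |V (t (i + 1)) k - V (t i) k| ≤ D := by
    intro k
    obtain ⟨P, hP, hroot⟩ := csg_curve q g k
    exact ⟨P.natDegree, fun t ht htm n => csg_bv (hcont k) (fun l hl => hV01 l hl k) hP
      (fun l hl => hroot l hl.1 hl.2 (V l) (hV l hl)) ht htm n⟩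
  let η : ℝ := min 1 (ε / 5)
  have hη : 0 < η := lt_min one_pos (by linarith)
  have hη1 : η ≤ 1 := min_le_left _ _
  have hηε : 5 * η ≤ ε := by
    have : η ≤ ε / 5 := min_le_right _ _
    linarith
  obtain ⟨t, ht, htm, ht1, htV, hts⟩ := csg_seq hcont hbv (e := η / 12) (by linarith) (by linarith)
  let T : ℕ → ℝ := fun n => ∑' i, t (i + n)
  have hT : ∀ n, T n = t n + T (n + 1) := by
    intro n
    have h1 : Summable fun i => t (i + n) := (summable_nat_add_iff n).2 hts
    simp only [T]
    rw [h1.tsum_eq_zero_add, zero_add]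
    congr 1
    refine tsum_congr fun i => ?_
    congr 1
    omega
  have hT0 : ∀ n, 0 ≤ T n := fun n => tsum_nonneg fun i => (htm _).1.le
  obtain ⟨M, hM⟩ : ∃ M, T M ≤ η :=
    ((tendsto_sum_nat_add t).eventually (eventually_le_nhds hη)).exists
  refine ⟨V (t M) x₁, ?_, ?_⟩
  · obtain ⟨σ, N, h⟩ := csg_finite_half q g hg (lam := t) (T := T) (V := fun i => V (t i))
      (e := η / 12) (η := η) (fun i x => hV01 _ (htm i) x) (fun i => (htm i).1)
      (fun i => (htm i).2) (fun i => ht (Nat.le_succ i)) ht1 (by linarith) (by linarith) hη hη1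
      (by linarith) htV hT hT0 (fun n x => by
        obtain ⟨p, hp, r, hr, h1, h2⟩ := hV _ (htm n) x
        exact ⟨p, hp, h1⟩) M hM x₁
    refine ⟨σ, N, fun τ n hn => ?_⟩
    obtain ⟨hn0, h1⟩ := h τ n hn
    have hn0' : (0 : ℝ) < n := by exact_mod_cast hn0
    rw [gamePayoff, one_div, ← div_eq_inv_mul, le_div_iff₀ hn0']
    nlinarith
  · obtain ⟨σ, N, h⟩ := csg_finite_half (fun x j i => q x i j) (fun x j i => 1 - g x i j)
      (fun x j i => ⟨by linarith [(hg x i j).2], by linarith [(hg x i j).1]⟩)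
      (lam := t) (T := T) (V := fun i x => 1 - V (t i) x)
      (e := η / 12) (η := η) (fun i x => by
        have := hV01 _ (htm i) x
        exact ⟨by linarith [this.2], by linarith [this.1]⟩) (fun i => (htm i).1)
      (fun i => (htm i).2) (fun i => ht (Nat.le_succ i)) ht1 (by linarith) (by linarith) hη hη1
      (by linarith) (fun i x => by
        have := htV i x
        rw [abs_sub_comm] at this
        convert this using 2
        ring) hT hT0 (fun n x => by
        obtain ⟨p, hp, r, hr, h1, h2⟩ := hV _ (htm n) x
        refine ⟨r, hr, fun i => ?_⟩
        have h3 := h2 i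
        have h4 : ∑ j, r j * (t n * (1 - g x i j) + (1 - t n) * (1 - V (t n) (q x i j))) =
            ∑ j, r j - ∑ j, r j * (t n * g x i j + (1 - t n) * V (t n) (q x i j)) := by
          rw [← Finset.sum_sub_distrib]
          exact Finset.sum_congr rfl fun j _ => by ring
        rw [h4, hr.2]
        linarith) M hM x₁
    refine ⟨fun h => σ (h.map Prod.swap), N, fun σ' n hn => ?_⟩
    obtain ⟨hn0, h1⟩ := h (fun h => σ' (h.map Prod.swap)) n hn
    have h2 := csg_expPay_swap q g σ' σ n x₁ []
    rw [List.map_nil] at h2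
    rw [h2] at h1
    have hn0' : (0 : ℝ) < n := by exact_mod_cast hn0
    rw [gamePayoff, one_div, ← div_eq_inv_mul, div_le_iff₀ hn0']
    nlinarith

end FiniteGame

section Periodic

lemma csg_finite_minimal {Ω : Type*} [MetricSpace Ω] [CompactSpace Ω] {F : Ω → Ω}
    (hF : Isometry F) (hmin : ∀ y z : Ω, ∀ ε > 0, ∃ n, dist (F^[n] y) z < ε)
    {S : Type*} [Finite S] (φ : S → Ω → ℝ) (hle : ∀ s x y, φ s y - φ s x ≤ dist x y)
    (hatt : ∀ x y, ∃ s, dist x y = φ s y - φ s x) : Finite Ω := by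
  -- the transitive family of commuting isometries
  let G : Set (Ω → Ω) := {u | Isometry u ∧ ∀ x, u (F x) = F (u x)}
  have hGcomp : ∀ u ∈ G, ∀ v ∈ G, u ∘ v ∈ G := fun u hu v hv =>
    ⟨hu.1.comp hv.1, fun x => by simp only [Function.comp_apply, hv.2, hu.2]⟩
  have hGiter : ∀ u ∈ G, ∀ n x, u (F^[n] x) = F^[n] (u x) := by
    intro u hu n
    induction n with
    | zero => intro x; rfl
    | succ n ih => intro x; rw [Function.iterate_succ_apply, ih, hu.2, Function.iterate_succ_apply]
  have hFn : ∀ n, Isometry (F^[n]) := fun n => by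
    induction n with
    | zero => exact isometry_id
    | succ n ih => exact ih.comp hF
  have hGconst : ∀ u ∈ G, ∀ x y, dist x (u x) = dist y (u y) := by
    have hone : ∀ u ∈ G, ∀ x y, dist y (u y) ≤ dist x (u x) := by
      intro u hu x y
      refine le_of_forall_pos_le_add fun ε hε => ?_
      obtain ⟨n, hn⟩ := hmin x y (ε / 2) (by linarith)
      have h1 : dist (F^[n] x) (u (F^[n] x)) = dist x (u x) := by
        rw [hGiter u hu, (hFn n).dist_eq]
      have h2 : dist (u (F^[n] x)) (u y) = dist (F^[n] x) y := hu.1.dist_eq _ _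
      have h3 := dist_triangle4 y (F^[n] x) (u (F^[n] x)) (u y)
      rw [dist_comm y (F^[n] x)] at h3
      linarith
    exact fun u hu x y => le_antisymm (hone u hu y x) (hone u hu x y)
  have hGtrans : ∀ x y, ∃ u ∈ G, u x = y := by
    intro x y
    have hcl : y ∈ closure (Set.range fun n => F^[n] x) := by
      rw [Metric.mem_closure_range_iff]
      intro ε hε
      obtain ⟨n, hn⟩ := hmin x y ε hε
      exact ⟨n, by rwa [dist_comm]⟩
    obtain ⟨U, hUr, hU⟩ := mem_closure_iff_ultrafilter.1 hcl
    obtain ⟨W, hW⟩ : ∃ W : Ultrafilter ℕ, Tendsto (fun n => F^[n] x) W (𝓝 y) := by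
      have hne : (comap (fun n => F^[n] x) (U : Filter Ω)).NeBot := by
        rw [comap_neBot_iff_frequently]
        exact (Filter.Eventually.frequently hUr).mono fun z hz => hz
      refine ⟨Ultrafilter.of (comap (fun n => F^[n] x) (U : Filter Ω)), ?_⟩
      exact (tendsto_comap.mono_left (Ultrafilter.of_le _)).mono_right hU
    have hlim : ∀ z, ∃ w, Tendsto (fun n => F^[n] z) W (𝓝 w) := by
      intro z
      obtain ⟨w, -, hw⟩ := isCompact_univ.ultrafilter_le_nhds (W.map fun n => F^[n] z) (by simp)
      exact ⟨w, hw⟩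
    choose u hu using hlim
    refine ⟨u, ⟨?_, ?_⟩, tendsto_nhds_unique (hu x) hW⟩
    · refine Isometry.of_dist_eq fun a b => ?_
      refine tendsto_nhds_unique ((hu a).dist (hu b)) ?_
      simp only [(hFn _).dist_eq]
      exact tendsto_const_nhds
    · intro z
      refine tendsto_nhds_unique (hu (F z)) ?_
      have := (hF.continuous.tendsto (u z)).comp (hu z)
      refine this.congr fun n => ?_
      simp only [Function.comp_apply, ← Function.iterate_succ_apply', Function.iterate_succ_apply]
  -- extremal translations
  let E : Set (Ω → Ω) := {h | h ∈ G ∧ ∀ g ∈ G, ∀ x, 0 < dist x (g x) →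
    dist x (h (g x)) < dist x (h x) + dist x (g x)}
  have hext : ∀ x y, ∃ h ∈ E, dist x (h x) = dist x y + dist y (h x) := by
    intro x y
    have hcl : IsClosed {z | dist x z = dist x y + dist y z} :=
      isClosed_eq (by fun_prop) (by fun_prop)
    obtain ⟨z, hz, hmax⟩ := hcl.isCompact.exists_isMaxOn ⟨y, by simp⟩
      (f := fun z => dist x z) (by fun_prop)
    obtain ⟨h, hh, rfl⟩ := hGtrans x z
    refine ⟨h, ⟨hh, ?_⟩, hz⟩
    intro g hg w hw
    rw [hGconst g hg w x] at hw ⊢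
    rw [hGconst h hh w x]
    have hc := hGconst (h ∘ g) (hGcomp h hh g hg) w x
    simp only [Function.comp_apply] at hc
    rw [hc]
    by_contra hcon
    push Not at hcon
    have e1 : dist (h x) (h (g x)) = dist x (g x) := hh.1.dist_eq _ _
    have hz' : dist x (h x) = dist x y + dist y (h x) := hz
    have t1 := dist_triangle x y (h (g x))
    have t2 := dist_triangle y (h x) (h (g x))
    have hmem : h (g x) ∈ {z | dist x z = dist x y + dist y z} := by
      show dist x (h (g x)) = dist x y + dist y (h (g x))
      linarith
    have : dist x (h (g x)) ≤ dist x (h x) := hmax hmem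
    linarith
  let Good : Ω → Set S := fun x => {s | ∃ h ∈ E, φ s (h x) - φ s x = dist x (h x)}
  refine Finite.of_injective Good ?_
  intro x y hxy
  by_contra hne
  have hpos : 0 < dist x y := dist_pos.2 hne
  obtain ⟨h, hh, hd⟩ := hext x y
  obtain ⟨s, hs⟩ := hatt x (h x)
  have hsx : s ∈ Good x := ⟨h, hh, hs.symm⟩
  have hsxy : φ s y - φ s x = dist x y := by
    have a1 := hle s y (h x)
    have a2 := hle s x y
    linarith
  rw [hxy] at hsx
  obtain ⟨k, hk, hky⟩ := hsx
  obtain ⟨g, hg, rfl⟩ := hGtrans x y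
  have b1 := hk.2 g hg x hpos
  have b2 := hle s x (k (g x))
  have b3 := hGconst k hk.1 x (g x)
  linarith

lemma csg_periodic {X : Type*} [MetricSpace X] [CompactSpace X] {f : X → X}
    (hf : LipschitzWith 1 f)
    {S : Type*} [Finite S] (φ : S → X → ℝ) (hle : ∀ s x y, φ s y - φ s x ≤ dist x y)
    (hatt : ∀ x y, ∃ s, dist x y = φ s y - φ s x) (x : X) {ε : ℝ} (hε : 0 < ε) :
    ∃ p > 0, ∃ n₀, ∀ n ≥ n₀, ∀ k, dist (f^[n + k * p] x) (f^[n] x) ≤ ε := by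
  have hd : ∀ n a b, dist (f^[n] a) (f^[n] b) ≤ dist a b := fun n a b => by
    have := (hf.iterate n).dist_le_mul a b
    simpa using this
  let W : Set X := {y | ∀ δ > 0, ∀ N, ∃ n ≥ N, dist (f^[n] x) y < δ}
  have hW : ∀ y, y ∈ W ↔ MapClusterPt y atTop (fun n => f^[n] x) := by
    intro y
    rw [(Metric.nhds_basis_ball).mapClusterPt_iff_frequently]
    simp only [frequently_atTop, Metric.mem_ball]
    rfl
  have hWne : ∃ y, y ∈ W := by
    obtain ⟨y, hy⟩ := exists_clusterPt_of_compactSpace (map (fun n => f^[n] x) atTop)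
    exact ⟨y, (hW y).2 hy⟩
  have hWcl : IsClosed W := by
    have : W = {y | MapClusterPt y atTop (fun n => f^[n] x)} := Set.ext hW
    rw [this]
    exact isClosed_setOfPred_clusterPt
  have hWf : ∀ y ∈ W, f y ∈ W := by
    intro y hy δ hδ N
    obtain ⟨n, hn, hy'⟩ := hy δ hδ N
    refine ⟨n + 1, by omega, ?_⟩
    rw [Function.iterate_succ_apply']
    exact lt_of_le_of_lt (hd 1 _ _) hy'
  have hmin : ∀ y ∈ W, ∀ z ∈ W, ∀ δ > 0, ∀ N, ∃ n ≥ N, dist (f^[n] y) z < δ := by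
    intro y hy z hz δ hδ N
    obtain ⟨n, -, hn⟩ := hy (δ / 2) (by linarith) 0
    obtain ⟨m, hm, hm'⟩ := hz (δ / 2) (by linarith) (n + N)
    refine ⟨m - n, by omega, ?_⟩
    have h1 := hd (m - n) y (f^[n] x)
    rw [← Function.iterate_add_apply, show m - n + n = m by omega, dist_comm y] at h1
    have := dist_triangle (f^[m - n] y) (f^[m] x) z
    linarith
  let F : W → W := fun y => ⟨f y, hWf y y.2⟩
  have hFn : ∀ n (y : W), ((F^[n] y : W) : X) = f^[n] y := by
    intro n
    induction n with
    | zero => intro y; rfl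
    | succ n ih => intro y; rw [Function.iterate_succ_apply, Function.iterate_succ_apply, ih]
  have hF : Isometry F := by
    refine Isometry.of_dist_eq fun y z => le_antisymm (hd 1 y z) ?_
    refine le_of_forall_pos_le_add fun δ hδ => ?_
    obtain ⟨n, hn, h1⟩ := hmin y y.2 y y.2 (δ / 4) (by linarith) 1
    obtain ⟨j, -, h2⟩ := hmin y y.2 z z.2 (δ / 4) (by linarith) 0
    have h3 := hd n (f^[j] y) z
    have h4 := hd j (f^[n] y) y
    rw [← Function.iterate_add_apply, add_comm n j, Function.iterate_add_apply] at h3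
    obtain ⟨m, rfl⟩ : ∃ m, n = m + 1 := ⟨n - 1, by omega⟩
    have h5 := hd m (f y) (f z)
    rw [← Function.iterate_succ_apply, ← Function.iterate_succ_apply] at h5
    have t1 := dist_triangle4 (y : X) (f^[m + 1] y) (f^[m + 1] z) z
    have t2 := dist_triangle4 (f^[m + 1] z) (f^[j] (f^[m + 1] y)) (f^[j] y) z
    rw [dist_comm (y : X) (f^[m + 1] y)] at t1
    rw [dist_comm (f^[m + 1] (z : X)) (f^[j] (f^[m + 1] y))] at t2
    change dist (y : X) z ≤ dist (f y) (f z) + δ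
    linarith
  have hcs : CompactSpace W := isCompact_iff_compactSpace.1 hWcl.isCompact
  have hfin : Finite W := by
    refine csg_finite_minimal hF (fun y z δ hδ => ?_) (fun s (y : W) => φ s y)
      (fun s a b => hle s a b) (fun a b => hatt a b)
    obtain ⟨n, -, hn⟩ := hmin y y.2 z z.2 δ hδ 0
    refine ⟨n, ?_⟩
    rw [Subtype.dist_eq, hFn]
    exact hn
  obtain ⟨y, hy⟩ := hWne
  obtain ⟨a, b, hab, heq⟩ : ∃ a b, a < b ∧ F^[a] ⟨y, hy⟩ = F^[b] ⟨y, hy⟩ := by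
    obtain ⟨a, b, hne, heq⟩ := Finite.exists_ne_map_eq_of_infinite
      (fun n : ℕ => F^[n] ⟨y, hy⟩)
    rcases lt_or_gt_of_ne hne with h | h
    · exact ⟨a, b, h, heq⟩
    · exact ⟨b, a, h, heq.symm⟩
  have hper : f^[b - a] y = y := by
    have h1 : F^[a] ⟨y, hy⟩ = F^[a] (F^[b - a] ⟨y, hy⟩) := by
      rw [← Function.iterate_add_apply, show a + (b - a) = b by omega]
      exact heq
    have h2 := (hF.injective.iterate a) h1
    have h3 := congrArg Subtype.val h2
    rw [hFn] at h3
    exact h3.symm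
  have hperk : ∀ k, f^[k * (b - a)] y = y := by
    intro k
    induction k with
    | zero => simp
    | succ k ih => rw [add_mul, one_mul, Function.iterate_add_apply, hper, ih]
  obtain ⟨n₀, -, hn₀⟩ := hy (ε / 2) (by linarith) 0
  refine ⟨b - a, by omega, n₀, fun n hn k => ?_⟩
  have h1 := hd (n - n₀) (f^[k * (b - a)] (f^[n₀] x)) y
  have h1' := hd (k * (b - a)) (f^[n₀] x) y
  rw [hperk] at h1'
  have h2 := hd (n - n₀) (f^[n₀] x) y
  rw [← Function.iterate_add_apply, show n - n₀ + n₀ = n by omega] at h2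
  rw [← Function.iterate_add_apply, ← Function.iterate_add_apply,
    show n - n₀ + k * (b - a) + n₀ = n + k * (b - a) by omega] at h1
  rw [← Function.iterate_add_apply] at h1'
  rw [← Function.iterate_add_apply] at h1
  have := dist_triangle (f^[n + k * (b - a)] x) (f^[n - n₀] y) (f^[n] x)
  rw [dist_comm (f^[n - n₀] y) (f^[n] x)] at this
  linarith

lemma csg_l1 {m : ℕ} (X : Set (PiLp 1 fun _ : Fin m => ℝ)) :
    ∃ φ : (Fin m → Bool) → X → ℝ, (∀ s x y, φ s y - φ s x ≤ dist x y) ∧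
      ∀ x y, ∃ s, dist x y = φ s y - φ s x := by
  refine ⟨fun s x => ∑ i, (if s i then 1 else -1) * (x : PiLp 1 fun _ : Fin m => ℝ) i, ?_, ?_⟩
  · intro s x y
    rw [← Finset.sum_sub_distrib, Subtype.dist_eq, PiLp.dist_eq_of_L1]
    refine Finset.sum_le_sum fun i _ => ?_
    rw [Real.dist_eq, abs_sub_comm]
    split_ifs
    · rw [one_mul, one_mul]
      exact le_abs_self _
    · have := neg_abs_le ((y : PiLp 1 fun _ : Fin m => ℝ) i - (x : PiLp 1 fun _ : Fin m => ℝ) i)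
      linarith
  · intro x y
    refine ⟨fun i => decide ((x : PiLp 1 fun _ : Fin m => ℝ) i ≤
      (y : PiLp 1 fun _ : Fin m => ℝ) i), ?_⟩
    rw [← Finset.sum_sub_distrib, Subtype.dist_eq, PiLp.dist_eq_of_L1]
    refine Finset.sum_congr rfl fun i _ => ?_
    rw [Real.dist_eq]
    by_cases h : (x : PiLp 1 fun _ : Fin m => ℝ) i ≤ (y : PiLp 1 fun _ : Fin m => ℝ) i
    · simp only [h, decide_true, if_true]
      rw [abs_of_nonpos (by linarith)]
      ring
    · rw [abs_of_pos (by linarith)]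
      simp only [h, decide_false]
      simp
      ring

end Periodic

section Assembly

lemma csg_power {A X : Type*} [Fintype A] [DecidableEq A] [PseudoMetricSpace X] (f : A → X → X)
    (hf : ∀ a, LipschitzWith 1 (f a)) (hcomm : ∀ a b x, f a (f b x) = f b (f a x)) :
    ∃ H : (A → ℕ) → X → X, (∀ x, H 0 x = x) ∧ (∀ c x y, dist (H c x) (H c y) ≤ dist x y) ∧
      (∀ c a n x, H (c + Pi.single a n) x = (f a)^[n] (H c x)) ∧
      (∀ c a n x, H (c + Pi.single a n) x = H c ((f a)^[n] x)) := by
  have hd : ∀ a n x y, dist ((f a)^[n] x) ((f a)^[n] y) ≤ dist x y := fun a n x y => by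
    have := ((hf a).iterate n).dist_le_mul x y
    simpa using this
  have hci : ∀ a b, Function.Commute (f a) (f b) := fun a b x => hcomm a b x
  have key : ∀ s : Finset A, ∃ H : (A → ℕ) → X → X, (∀ x, H 0 x = x) ∧
      (∀ c x y, dist (H c x) (H c y) ≤ dist x y) ∧
      (∀ c, ∀ a ∈ s, ∀ n x, H (c + Pi.single a n) x = (f a)^[n] (H c x)) ∧
      (∀ c, ∀ a ∉ s, ∀ n x, H (c + Pi.single a n) x = H c x) ∧
      (∀ c a, Function.Commute (f a) (H c)) := by
    intro s
    induction s using Finset.induction_on with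
    | empty =>
      exact ⟨fun _ x => x, fun x => rfl, fun _ _ _ => le_rfl, fun c a ha => by simp at ha,
        fun _ _ _ _ _ => rfl, fun _ _ _ => rfl⟩
    | insert b s hb ih =>
      obtain ⟨H, h1, h2, h3, h4, h5⟩ := ih
      refine ⟨fun c x => (f b)^[c b] (H c x), fun x => by simp [h1],
        fun c x y => (hd _ _ _ _).trans (h2 c x y), ?_, ?_, ?_⟩
      · intro c a ha n x
        simp only [Pi.add_apply]
        by_cases hab : a = b
        · subst hab
          rw [h4 c a hb, Pi.single_eq_same, add_comm, Function.iterate_add_apply]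
        · rw [h3 c a (Finset.mem_of_mem_insert_of_ne ha hab),
            Pi.single_eq_of_ne (Ne.symm hab), add_zero]
          exact ((hci b a).iterate_iterate (c b) n) (H c x)
      · intro c a ha n x
        simp only [Finset.mem_insert, not_or] at ha
        simp only [Pi.add_apply]
        rw [h4 c a ha.2, Pi.single_eq_of_ne (Ne.symm ha.1), add_zero]
      · intro c a x
        simp only
        rw [← (h5 c a) x]
        exact ((hci a b).iterate_right (c b)) (H c x)
  obtain ⟨H, h1, h2, h3, h4, h5⟩ := key Finset.univ
  refine ⟨H, h1, h2, fun c a n x => h3 c a (Finset.mem_univ a) n x, fun c a n x => ?_⟩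
  rw [h3 c a (Finset.mem_univ a) n x]
  exact ((h5 c a).iterate_left n) x

lemma csg_power_close {A X : Type*} [Fintype A] [DecidableEq A] [PseudoMetricSpace X]
    {f : A → X → X} {H : (A → ℕ) → X → X}
    (h2 : ∀ c x y, dist (H c x) (H c y) ≤ dist x y)
    (h4 : ∀ c a n x, H (c + Pi.single a n) x = H c ((f a)^[n] x)) {ε : ℝ} (x : X)
    (c c' : A → ℕ) (h : ∀ a, dist ((f a)^[c a] x) ((f a)^[c' a] x) ≤ ε) :
    dist (H c x) (H c' x) ≤ Fintype.card A * ε := by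
  have hupd : ∀ (d : A → ℕ) a n, H (Function.update d a n) x =
      H (Function.update d a 0) ((f a)^[n] x) := by
    intro d a n
    rw [← h4]
    congr 1
    ext b
    by_cases hb : b = a
    · subst hb; simp
    · simp [hb]
  have key : ∀ s : Finset A, dist (H c x) (H (fun a => if a ∈ s then c' a else c a) x)
      ≤ s.card * ε := by
    intro s
    induction s using Finset.induction_on with
    | empty => simp
    | insert b s hb ih =>
      rw [Finset.card_insert_of_notMem hb]
      push_cast
      refine (dist_triangle _ (H (fun a => if a ∈ s then c' a else c a) x) _).trans ?_
      rw [add_mul, one_mul]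
      refine add_le_add ih ?_
      have e1 : (fun a => if a ∈ insert b s then c' a else c a) =
          Function.update (fun a => if a ∈ s then c' a else c a) b (c' b) := by
        ext a
        by_cases ha : a = b
        · subst ha; simp
        · simp [ha]
      have e2 : (fun a => if a ∈ s then c' a else c a) =
          Function.update (fun a => if a ∈ s then c' a else c a) b (c b) := by
        ext a
        by_cases ha : a = b
        · subst ha; simp [hb]
        · simp [ha]
      have e3 : H (fun a => if a ∈ s then c' a else c a) x = _ :=
        (congrArg (fun d => H d x) e2).trans (hupd _ b (c b))
      have e4 : H (fun a => if a ∈ insert b s then c' a else c a) x = _ :=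
        (congrArg (fun d => H d x) e1).trans (hupd _ b (c' b))
      rw [e3, e4]
      exact (h2 _ _ _).trans (h b)
  have := key Finset.univ
  simpa using this

lemma csg_value_of_approx {X I J : Type*} [Fintype I] [Fintype J]
    (q : X → I → J → X) (g : X → I → J → ℝ) (x₁ : X)
    (h : ∀ ε > 0, ∃ w : ℝ, (∃ (σ : List (I × J) → PMF I) (N : ℕ),
        ∀ (τ : List (I × J) → PMF J), ∀ n ≥ N, w - ε ≤ gamePayoff q g σ τ x₁ n) ∧
      (∃ (τ : List (I × J) → PMF J) (N : ℕ), ∀ (σ : List (I × J) → PMF I), ∀ n ≥ N,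
        gamePayoff q g σ τ x₁ n ≤ w + ε)) :
    ∃ v : ℝ, Guarantees1 q g x₁ v ∧ Guarantees2 q g x₁ v := by
  let S : Set ℝ := {w | ∃ (σ : List (I × J) → PMF I) (N : ℕ),
        ∀ (τ : List (I × J) → PMF J), ∀ n ≥ N, w ≤ gamePayoff q g σ τ x₁ n}
  have hle : ∀ s ∈ S, ∀ u, (∃ (τ : List (I × J) → PMF J) (N : ℕ),
      ∀ (σ : List (I × J) → PMF I), ∀ n ≥ N, gamePayoff q g σ τ x₁ n ≤ u) → s ≤ u := by
    rintro s ⟨σ, N, hσ⟩ u ⟨τ, N', hτ⟩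
    exact (hσ τ (max N N') (le_max_left _ _)).trans (hτ σ (max N N') (le_max_right _ _))
  obtain ⟨w₁, hw₁, hw₂⟩ := h 1 one_pos
  have hne : S.Nonempty := ⟨_, hw₁⟩
  have hbdd : BddAbove S := ⟨w₁ + 1, fun s hs => hle s hs _ hw₂⟩
  refine ⟨sSup S, ?_, ?_⟩
  · intro ε hε
    obtain ⟨s, ⟨σ, N, hs⟩, hlt⟩ := exists_lt_of_lt_csSup hne (show sSup S - ε < sSup S by linarith)
    exact ⟨σ, N, fun τ n hn => hlt.le.trans (hs τ n hn)⟩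
  · intro ε hε
    obtain ⟨w, hw, τ, N, hτ⟩ := h (ε / 2) (by linarith)
    have : w - ε / 2 ≤ sSup S := le_csSup hbdd hw
    exact ⟨τ, N, fun σ n hn => (hτ σ n hn).trans (by linarith)⟩

/-- Eventually periodic reduction of a counter. -/
def csgRed (n₀ p c : ℕ) : ℕ := if c < n₀ then c else n₀ + (c - n₀) % p

lemma csgRed_lt {n₀ p : ℕ} (hp : 0 < p) (c : ℕ) : csgRed n₀ p c < n₀ + p := by
  unfold csgRed
  split_ifs
  · omega
  · have := Nat.mod_lt (c - n₀) hp
    omega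

lemma csgRed_succ {n₀ p : ℕ} (c : ℕ) :
    csgRed n₀ p (csgRed n₀ p c + 1) = csgRed n₀ p (c + 1) := by
  by_cases h : c < n₀
  · have : csgRed n₀ p c = c := if_pos h
    rw [this]
  · have h1 : csgRed n₀ p c = n₀ + (c - n₀) % p := if_neg h
    rw [h1]
    unfold csgRed
    rw [if_neg (by omega), if_neg (by omega)]
    rw [show n₀ + (c - n₀) % p + 1 - n₀ = (c - n₀) % p + 1 by omega,
      show c + 1 - n₀ = c - n₀ + 1 by omega, Nat.mod_add_mod]

lemma csgRed_eq {n₀ p : ℕ} (c : ℕ) :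
    csgRed n₀ p c = c ∨ (n₀ ≤ csgRed n₀ p c ∧ ∃ k, c = csgRed n₀ p c + k * p) := by
  by_cases h : c < n₀
  · exact Or.inl (if_pos h)
  · right
    have h1 : csgRed n₀ p c = n₀ + (c - n₀) % p := if_neg h
    rw [h1]
    refine ⟨by omega, (c - n₀) / p, ?_⟩
    have := Nat.mod_add_div (c - n₀) p
    rw [mul_comm] at this
    omega

lemma csg_approx {X I J : Type*} [Fintype I] [Nonempty I] [Fintype J] [Nonempty J]
    [MetricSpace X] [CompactSpace X] (q : X → I → J → X)
    (hLip : ∀ i j, LipschitzWith 1 (fun x => q x i j))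
    (hcomm : ∀ (x : X) (i i' : I) (j j' : J), q (q x i j) i' j' = q (q x i' j') i j)
    (g : X → I → J → ℝ) (hg01 : ∀ x i j, g x i j ∈ Set.Icc (0 : ℝ) 1)
    (hgc : ∀ i j, Continuous fun x => g x i j)
    (hper : ∀ f : X → X, LipschitzWith 1 f → ∀ x, ∀ ε > 0,
      ∃ p > 0, ∃ n₀, ∀ n ≥ n₀, ∀ k, dist (f^[n + k * p] x) (f^[n] x) ≤ ε) (x₁ : X)
    {ε : ℝ} (hε : 0 < ε) :
    ∃ w : ℝ, (∃ (σ : List (I × J) → PMF I) (N : ℕ),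
        ∀ (τ : List (I × J) → PMF J), ∀ n ≥ N, w - ε ≤ gamePayoff q g σ τ x₁ n) ∧
      (∃ (τ : List (I × J) → PMF J) (N : ℕ), ∀ (σ : List (I × J) → PMF I), ∀ n ≥ N,
        gamePayoff q g σ τ x₁ n ≤ w + ε) := by
  classical
  -- uniform continuity of the payoff
  obtain ⟨δ, hδ, hgδ⟩ : ∃ δ > 0, ∀ x y, dist x y < δ → ∀ i j, |g x i j - g y i j| ≤ ε / 2 := by
    have hc : Continuous fun x => fun a : I × J => g x a.1 a.2 :=
      continuous_pi fun a => hgc a.1 a.2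
    have hu := CompactSpace.uniformContinuous_of_continuous hc
    obtain ⟨δ, hδ, h⟩ := Metric.uniformContinuous_iff.1 hu (ε / 2) (by linarith)
    refine ⟨δ, hδ, fun x y hxy i j => ?_⟩
    have h1 := (dist_le_pi_dist (fun a : I × J => g x a.1 a.2) (fun a : I × J => g y a.1 a.2)
      (i, j)).trans (h hxy).le
    rwa [Real.dist_eq] at h1
  let f : I × J → X → X := fun a x => q x a.1 a.2
  obtain ⟨H, hH0, hHd, hHl, hHr⟩ := csg_power f (fun a => hLip a.1 a.2)
    (fun a b x => hcomm x b.1 a.1 b.2 a.2)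
  let D : ℝ := Fintype.card (I × J)
  have hD : 0 ≤ D := Nat.cast_nonneg _
  let ε₀ : ℝ := δ / (2 * (D + 1))
  have hε₀ : 0 < ε₀ := by positivity
  have hDε : D * ε₀ < δ := by
    have : D * ε₀ = δ * (D / (2 * (D + 1))) := by simp only [ε₀]; ring
    rw [this]
    have h2 : D / (2 * (D + 1)) < 1 := by
      rw [div_lt_one (by positivity)]
      linarith
    nlinarith
  choose p hp n₀ hpn using fun a : I × J => hper (f a) (hLip a.1 a.2) x₁ ε₀ hε₀
  let K := (a : I × J) → Fin (n₀ a + p a)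
  let red : (I × J → ℕ) → K := fun c a => ⟨csgRed (n₀ a) (p a) (c a), csgRed_lt (hp a) _⟩
  let qK : K → I → J → K := fun k i j => Function.update k (i, j)
    ⟨csgRed (n₀ (i, j)) (p (i, j)) (k (i, j) + 1), csgRed_lt (hp _) _⟩
  let gK : K → I → J → ℝ := fun k i j => g (H (fun a => (k a : ℕ)) x₁) i j
  have hred : ∀ c i j, qK (red c) i j = red (c + Pi.single (i, j) 1) := by
    intro c i j
    ext a
    by_cases ha : a = (i, j)
    · subst ha
      simp only [qK, red, Function.update_self, Pi.add_apply, Pi.single_eq_same]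
      exact csgRed_succ _
    · simp only [qK, red, Function.update_of_ne ha, Pi.add_apply, Pi.single_eq_of_ne ha, add_zero]
  have hclose : ∀ c, dist (H c x₁) (H (fun a => (red c a : ℕ)) x₁) < δ := by
    intro c
    refine lt_of_le_of_lt (csg_power_close hHd hHr (ε := ε₀) x₁ c _ fun a => ?_) hDε
    change dist ((f a)^[c a] x₁) ((f a)^[csgRed (n₀ a) (p a) (c a)] x₁) ≤ ε₀
    rcases csgRed_eq (n₀ := n₀ a) (p := p a) (c a) with h | ⟨h1, k, hk⟩
    · rw [h, dist_self]
      exact hε₀.le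
    · have := hpn a _ h1 k
      rwa [← hk] at this
  have hcmp : ∀ (σ : List (I × J) → PMF I) (τ : List (I × J) → PMF J) n c h,
      |expPay q g σ τ n (H c x₁) h - expPay qK gK σ τ n (red c) h| ≤ n * (ε / 2) := by
    intro σ τ n
    induction n with
    | zero => intro c h; simp [expPay]
    | succ n ih =>
      intro c h
      simp only [expPay]
      rw [← Finset.sum_sub_distrib]
      simp only [← Finset.sum_sub_distrib, ← mul_sub]
      have hs := csg_sum2 (csg_pmf_mem (σ h)) (csg_pmf_mem (τ h)) (((n + 1 : ℕ) : ℝ) * (ε / 2))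
      refine le_trans ?_ (le_of_eq hs)
      refine (Finset.abs_sum_le_sum_abs _ _).trans (Finset.sum_le_sum fun i _ => ?_)
      refine (Finset.abs_sum_le_sum_abs _ _).trans (Finset.sum_le_sum fun j _ => ?_)
      rw [abs_mul, abs_of_nonneg (mul_nonneg ENNReal.toReal_nonneg ENNReal.toReal_nonneg)]
      refine mul_le_mul_of_nonneg_left ?_ (mul_nonneg ENNReal.toReal_nonneg ENNReal.toReal_nonneg)
      have e1 : q (H c x₁) i j = H (c + Pi.single (i, j) 1) x₁ := by
        rw [hHl]
        rfl
      rw [e1, hred]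
      have a1 := ih (c + Pi.single (i, j) 1) (h ++ [(i, j)])
      have a2 := hgδ _ _ (hclose c) i j
      rw [add_sub_add_comm]
      refine (abs_add_le _ _).trans ?_
      push_cast
      have a3 : |g (H c x₁) i j - gK (red c) i j| ≤ ε / 2 := a2
      linarith
  have hγ : ∀ (σ : List (I × J) → PMF I) (τ : List (I × J) → PMF J) n,
      |gamePayoff q g σ τ x₁ n - gamePayoff qK gK σ τ (red 0) n| ≤ ε / 2 := by
    intro σ τ n
    have h1 := hcmp σ τ n 0 []
    rw [hH0] at h1
    unfold gamePayoff
    rw [← mul_sub, abs_mul, abs_of_nonneg (by positivity)]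
    rcases Nat.eq_zero_or_pos n with h | h
    · subst h
      simp
      linarith
    · have hn : (0 : ℝ) < n := by exact_mod_cast h
      rw [one_div, ← div_eq_inv_mul, div_le_iff₀ hn]
      linarith
  obtain ⟨w, ⟨σ, N, hσ⟩, ⟨τ, N', hτ⟩⟩ := csg_finite qK gK (fun k i j => hg01 _ i j) (red 0)
    (ε := ε / 2) (by linarith)
  refine ⟨w, ⟨σ, N, fun τ n hn => ?_⟩, ⟨τ, N', fun σ n hn => ?_⟩⟩
  · have h1 := hσ τ n hn
    have h2 := (abs_le.1 (hγ σ τ n)).1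
    linarith
  · have h1 := hτ σ n hn
    have h2 := (abs_le.1 (hγ σ τ n)).2
    linarith

end Assembly

/-- A deterministic commutative stochastic game on a compact subset of `ℝ^m` with the `ℓ¹` norm,
with finite action sets, a `1`-Lipschitz transition and a continuous payoff, has a uniform
value from every initial state. -/
theorem commutative_stochastic_game_has_uniform_value
    {m : ℕ} {I J : Type*} [Fintype I] [Nonempty I] [Fintype J] [Nonempty J]
    (X : Set (PiLp 1 fun _ : Fin m => ℝ)) (hXne : X.Nonempty) (hXc : IsCompact X)
    (q : X → I → J → X)
    (hLip : ∀ i j, LipschitzWith 1 (fun x => q x i j))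
    (hcomm : ∀ (x : X) (i i' : I) (j j' : J), q (q x i j) i' j' = q (q x i' j') i j)
    (g : X → I → J → ℝ)
    (hg01 : ∀ x i j, g x i j ∈ Set.Icc (0 : ℝ) 1)
    (hgc : ∀ i j, Continuous fun x => g x i j)
    (x₁ : X) :
    ∃ v : ℝ, Guarantees1 q g x₁ v ∧ Guarantees2 q g x₁ v := by
  have hcs : CompactSpace X := isCompact_iff_compactSpace.1 hXc
  obtain ⟨φ, hφ1, hφ2⟩ := csg_l1 X
  refine csg_value_of_approx q g x₁ fun ε hε => ?_
  exact csg_approx q hLip hcomm g hg01 hgc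
    (fun f hf x ε hε => csg_periodic hf φ hφ1 hφ2 x hε) x₁ hε
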